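/- Assume Chowla's conjecture. Then for every ε > 0 there exists N such that for all n ≥ N, every nontrivial monotone decreasing graph property P_n of n-vertex graphs in which every graph has at most n^{3/2−ε} edges is evasive. -/

import Mathlib

/-- A deterministic decision tree over a set of Boolean variables indexed by `ι`. -/
inductive DecisionTree (ι : Type) : Type
  | leaf : Bool → DecisionTree ι
  | node : ι → DecisionTree ι → DecisionTree ι → DecisionTree ι

namespace DecisionTree

/-- Evaluate a decision tree on an input assignment. -/
def eval {ι : Type} : DecisionTree ι → (ι → Bool) → Bool
  | leaf b, _ => b
  | node i t f, x => if x i then t.eval x else f.eval x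

/-- The depth (worst-case number of queries) of a decision tree. -/
def depth {ι : Type} : DecisionTree ι → ℕ
  | leaf _ => 0
  | node _ t f => max t.depth f.depth + 1

end DecisionTree

/-- The variables of a graph property on `n` vertices: pairs `i < j`. -/
def EdgeVar (n : ℕ) := {p : Fin n × Fin n // p.1 < p.2}

/-- The graph on `Fin n` determined by an assignment to the adjacency variables. -/
def graphOfInput {n : ℕ} (x : EdgeVar n → Bool) : SimpleGraph (Fin n) :=
  SimpleGraph.fromRel (fun i j => ∃ h : i < j, x ⟨(i, j), h⟩ = true)

/-- The deterministic query (decision-tree) complexity of a set of graphs on `Fin n`,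
viewed as a Boolean function of the adjacency variables. -/
noncomputable def queryComplexity {n : ℕ} (P : Set (SimpleGraph (Fin n))) : ℕ :=
  sInf {d | ∃ T : DecisionTree (EdgeVar n),
    (∀ x, T.eval x = true ↔ graphOfInput x ∈ P) ∧ T.depth ≤ d}

/-- A set of graphs on `Fin n` is evasive if its query complexity is `n(n-1)/2`,
the total number of adjacency variables. -/
def Evasive {n : ℕ} (P : Set (SimpleGraph (Fin n))) : Prop :=
  queryComplexity P = n * (n - 1) / 2

/-- `G` contains a (not necessarily induced) subgraph isomorphic to `H`. -/
def ContainsCopy {V : Type} (H : SimpleGraph V) {W : Type} (G : SimpleGraph W) : Prop :=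
  ∃ f : V → W, Function.Injective f ∧ ∀ v w : V, H.Adj v w → G.Adj (f v) (f w)

/-- The forbidden-subgraph property `Q_n^H`: graphs on `Fin n` containing no copy of `H`. -/
def ForbiddenSubgraphProperty {V : Type} (H : SimpleGraph V) (n : ℕ) :
    Set (SimpleGraph (Fin n)) :=
  {G | ¬ ContainsCopy H G}

/-- A prime `p` is an `ε`-near Fermat prime if `2^s ∣ p - 1` and `(p-1)/2^s ≤ p^ε`
for some `s ≥ 0`. -/
def NearFermatPrime (ε : ℝ) (p : ℕ) : Prop :=
  p.Prime ∧ ∃ s : ℕ, 2 ^ s ∣ p - 1 ∧ (((p - 1) / 2 ^ s : ℕ) : ℝ) ≤ (p : ℝ) ^ ε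

/-- A set of graphs on `Fin n` is a (labelled-vertex-invariant) graph property if it is
invariant under relabeling of the vertices. -/
def IsGraphProperty {n : ℕ} (P : Set (SimpleGraph (Fin n))) : Prop :=
  ∀ σ : Equiv.Perm (Fin n), ∀ G : SimpleGraph (Fin n),
    G ∈ P → G.map σ.toEmbedding ∈ P

/-- A set of graphs is monotone decreasing if it is closed under deletion of edges. -/
def MonotoneDecreasing {n : ℕ} (P : Set (SimpleGraph (Fin n))) : Prop :=
  ∀ G G' : SimpleGraph (Fin n), G' ≤ G → G ∈ P → G' ∈ P

noncomputable section OrderComplex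

open scoped Classical

variable {V : Type*}

/-- The incidence sign of `x` with respect to the chain `t`. -/
def incidenceSign (R : Type*) [CommRing R] [PartialOrder V] (x : V) (t : Finset V) : R :=
  (-1) ^ (t.filter (· < x)).card

/-- The simplicial boundary on functions on finite sets of poset elements. -/
def chainBoundary (R V : Type*) [CommRing R] [Fintype V] [PartialOrder V] :
    (Finset V → R) →ₗ[R] (Finset V → R) where
  toFun f t := ∑ x ∈ tᶜ, incidenceSign R x t * f (insert x t)
  map_add' f g := by
    ext t
    simp [mul_add, Finset.sum_add_distrib]
  map_smul' c f := by
    ext t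
    simp only [Pi.smul_apply, smul_eq_mul, RingHom.id_apply, Finset.mul_sum]
    exact Finset.sum_congr rfl fun x _ => by ring

/-- The functions supported on `K`. -/
def supportedOn (R : Type*) {T : Type*} [CommRing R] (K : Set T) : Submodule R (T → R) where
  carrier := {f | ∀ t ∉ K, f t = 0}
  add_mem' ha hb t ht := by simp [ha t ht, hb t ht]
  zero_mem' t _ := rfl
  smul_mem' c f hf t ht := by simp [hf t ht]

/-- A downward closed family of finite chains of a poset. -/
structure IsChainComplex [PartialOrder V] (K : Set (Finset V)) : Prop where
  chain : ∀ t ∈ K, ∀ x ∈ t, ∀ y ∈ t, x ≤ y ∨ y ≤ x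
  down : ∀ t ∈ K, ∀ s, s ⊆ t → s ∈ K

/-- Vanishing of the reduced homology of `K` with coefficients in `R`. -/
def ChainAcyclic (R : Type*) [CommRing R] [Fintype V] [PartialOrder V]
    (K : Set (Finset V)) : Prop :=
  ∀ f ∈ supportedOn R K, chainBoundary R V f = 0 →
    ∃ h ∈ supportedOn R K, chainBoundary R V h = f

section Basic

variable {R : Type*} [CommRing R] [PartialOrder V]

lemma incidenceSign_mul_self (x : V) (t : Finset V) :
    incidenceSign R x t * incidenceSign R x t = 1 := by
  simp only [incidenceSign, ← mul_pow]
  simp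

lemma incidenceSign_insert_of_lt {x y : V} {t : Finset V} (h : x < y) (hx : x ∉ t) :
    incidenceSign R y (insert x t) = -incidenceSign R y t := by
  simp only [incidenceSign]
  rw [Finset.filter_insert, if_pos h, Finset.card_insert_of_notMem (by simp [hx]), pow_succ]
  ring

lemma incidenceSign_insert_of_not_lt {x y : V} {t : Finset V} (h : ¬ x < y) :
    incidenceSign R y (insert x t) = incidenceSign R y t := by
  simp only [incidenceSign]
  rw [Finset.filter_insert, if_neg h]

lemma incidenceSign_mul_insert {x y : V} {t : Finset V} (hxy : x ≠ y) (hx : x ∉ t) (hy : y ∉ t)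
    (h : x ≤ y ∨ y ≤ x) :
    incidenceSign R x t * incidenceSign R y (insert x t) =
      -(incidenceSign R y t * incidenceSign R x (insert y t)) := by
  rcases h with h | h
  · have h' := lt_of_le_of_ne h hxy
    rw [incidenceSign_insert_of_lt h' hx, incidenceSign_insert_of_not_lt h'.asymm]
    ring
  · have h' := lt_of_le_of_ne h hxy.symm
    rw [incidenceSign_insert_of_lt h' hy, incidenceSign_insert_of_not_lt h'.asymm]
    ring

variable [Fintype V]

lemma chainBoundary_apply (f : Finset V → R) (t : Finset V) :
    chainBoundary R V f t = ∑ x ∈ tᶜ, incidenceSign R x t * f (insert x t) := rfl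

lemma chainBoundary_mem {K : Set (Finset V)} (hK : IsChainComplex K) {f : Finset V → R}
    (hf : f ∈ supportedOn R K) : chainBoundary R V f ∈ supportedOn R K := by
  intro t ht
  refine Finset.sum_eq_zero fun x _ => ?_
  rw [hf _ fun h => ht (hK.down _ h _ (Finset.subset_insert x t)), mul_zero]

lemma chainBoundary_chainBoundary {K : Set (Finset V)} (hK : IsChainComplex K) {f : Finset V → R}
    (hf : f ∈ supportedOn R K) : chainBoundary R V (chainBoundary R V f) = 0 := by
  ext t
  simp only [chainBoundary_apply, Finset.mul_sum, Pi.zero_apply]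
  rw [Finset.sum_sigma']
  refine Finset.sum_involution (fun z _ => ⟨z.2, z.1⟩) ?_ ?_ ?_ ?_
  · rintro ⟨x, y⟩ h
    simp only [Finset.mem_sigma, Finset.mem_compl, Finset.mem_insert, not_or] at h
    by_cases hc : insert y (insert x t) ∈ K
    · have h1 := hK.chain _ hc x (by simp) y (by simp)
      rw [← mul_assoc, ← mul_assoc, Finset.insert_comm x y,
        incidenceSign_mul_insert (Ne.symm h.2.1) h.1 h.2.2 h1]
      ring
    · have h2 : insert x (insert y t) ∉ K := by rwa [Finset.insert_comm]
      simp [hf _ hc, hf _ h2]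
  · rintro ⟨x, y⟩ h _ he
    simp only [Finset.mem_sigma, Finset.mem_compl, Finset.mem_insert, not_or] at h
    simp only [Sigma.mk.injEq, heq_eq_eq] at he
    exact h.2.1 he.1
  · rintro ⟨x, y⟩ h
    simp only [Finset.mem_sigma, Finset.mem_compl, Finset.mem_insert, not_or] at h ⊢
    exact ⟨h.2.2, Ne.symm h.2.1, h.1⟩
  · rintro ⟨x, y⟩ h
    rfl

lemma chainAcyclic_of_cone {K : Set (Finset V)} (hK : IsChainComplex K) (a : V)
    (ha : ∀ t ∈ K, insert a t ∈ K) : ChainAcyclic R K := by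
  intro f hf hdf
  refine ⟨fun t => if a ∈ t then incidenceSign R a (t.erase a) * f (t.erase a) else 0, ?_, ?_⟩
  · intro t ht
    by_cases hat : a ∈ t
    · have : t.erase a ∉ K := fun h => ht (by simpa [Finset.insert_erase hat] using ha _ h)
      simp [hf _ this]
    · simp [hat]
  · ext t
    rw [chainBoundary_apply]
    by_cases hat : a ∈ t
    · obtain ⟨s, hs, rfl⟩ : ∃ s, a ∉ s ∧ t = insert a s :=
        ⟨t.erase a, by simp, (Finset.insert_erase hat).symm⟩
      have h0 := congrFun hdf s
      rw [chainBoundary_apply, ← Finset.add_sum_erase _ _ (a := a) (by simpa using hs)] at h0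
      have hc : (insert a s)ᶜ = sᶜ.erase a := by ext; simp
      have h1 : ∑ x ∈ sᶜ.erase a, incidenceSign R x s * f (insert x s) =
          - (incidenceSign R a s * f (insert a s)) := by
        rw [eq_neg_iff_add_eq_zero, add_comm]; exact h0
      calc _ = ∑ x ∈ sᶜ.erase a,
            -incidenceSign R a s * (incidenceSign R x s * f (insert x s)) := by
            rw [hc]
            refine Finset.sum_congr rfl fun x hx => ?_
            simp only [Finset.mem_erase, Finset.mem_compl] at hx
            have he : (insert x (insert a s)).erase a = insert x s := by
              rw [Finset.insert_comm, Finset.erase_insert (by simp [hs, Ne.symm hx.1])]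
            rw [if_pos (by simp), he]
            by_cases hxs : insert x s ∈ K
            · have h2 := hK.chain _ (ha _ hxs) a (by simp) x (by simp)
              have h3 := incidenceSign_mul_insert (R := R) (Ne.symm hx.1) hs hx.2 h2
              have h4 := incidenceSign_mul_self (R := R) a s
              have h5 := incidenceSign_mul_self (R := R) a (insert x s)
              linear_combination (incidenceSign R a s * incidenceSign R a (insert x s) *
                f (insert x s)) * h3 - f (insert x s) * incidenceSign R x (insert a s) *
                incidenceSign R a (insert x s) * h4 -
                f (insert x s) * incidenceSign R a s * incidenceSign R x s * h5
            · rw [hf _ hxs]; ring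
        _ = f (insert a s) := by
            rw [← Finset.mul_sum, h1]
            linear_combination f (insert a s) * incidenceSign_mul_self (R := R) a s
    · rw [Finset.sum_eq_single a]
      · rw [if_pos (by simp), Finset.erase_insert hat, ← mul_assoc, incidenceSign_mul_self, one_mul]
      · intro x _ hxa
        rw [if_neg (by simp [hat, Ne.symm hxa]), mul_zero]
      · intro h
        simp [hat] at h

lemma chainAcyclic_union {K L : Set (Finset V)} (hK : IsChainComplex K) (hL : IsChainComplex L)
    (aK : ChainAcyclic R K) (aL : ChainAcyclic R L) (aKL : ChainAcyclic R (K ∩ L)) :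
    ChainAcyclic R (K ∪ L) := by
  intro f hf hdf
  set a : Finset V → R := fun t => if t ∈ K then f t else 0 with ha_def
  have ha : a ∈ supportedOn R K := fun t ht => by simp [a, ht]
  have hb : f - a ∈ supportedOn R L := by
    intro t ht
    by_cases h : t ∈ K
    · simp [a, h]
    · simp [a, h, hf t (by simp [h, ht])]
  have hdb : chainBoundary R V (f - a) = -chainBoundary R V a := by simp [hdf]
  have hda : chainBoundary R V a ∈ supportedOn R (K ∩ L) := by
    intro t ht
    by_cases h : t ∈ K
    · have h2 := chainBoundary_mem hL hb t fun h' => ht ⟨h, h'⟩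
      rw [hdb] at h2
      simpa using h2
    · exact chainBoundary_mem hK ha t h
  obtain ⟨c, hc, hdc⟩ := aKL _ hda (chainBoundary_chainBoundary hK ha)
  have hcK : c ∈ supportedOn R K := fun t ht => hc t fun h => ht h.1
  have hcL : c ∈ supportedOn R L := fun t ht => hc t fun h => ht h.2
  obtain ⟨u, hu, hdu⟩ := aK (a - c) (sub_mem ha hcK) (by simp [hdc])
  obtain ⟨v, hv, hdv⟩ := aL (f - a + c) (add_mem hb hcL) (by rw [map_add, hdb, hdc]; simp)
  refine ⟨u + v, fun t ht => ?_, ?_⟩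
  · simp only [Set.mem_union, not_or] at ht
    simp [hu t ht.1, hv t ht.2]
  · rw [map_add, hdu, hdv]; abel

end Basic

/-- The order complex of a set of poset elements. -/
def orderComplex [PartialOrder V] (X : Set V) : Set (Finset V) :=
  {t | (∀ x ∈ t, x ∈ X) ∧ ∀ x ∈ t, ∀ y ∈ t, x ≤ y ∨ y ≤ x}

section OrderComplexLemmas

variable {R : Type*} [CommRing R] [PartialOrder V]

lemma isChainComplex_orderComplex (X : Set V) : IsChainComplex (orderComplex X) where
  chain _ ht := ht.2
  down _ ht _ hs := ⟨fun x hx => ht.1 x (hs hx), fun x hx y hy => ht.2 x (hs hx) y (hs hy)⟩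

lemma insert_mem_orderComplex {X : Set V} {t : Finset V} (ht : t ∈ orderComplex X) {a : V}
    (ha : a ∈ X) (h : ∀ x ∈ t, x ≤ a ∨ a ≤ x) : insert a t ∈ orderComplex X := by
  refine ⟨fun x hx => ?_, fun x hx y hy => ?_⟩
  · rcases Finset.mem_insert.1 hx with rfl | hx
    exacts [ha, ht.1 x hx]
  · rcases Finset.mem_insert.1 hx with hxa | hxt <;> rcases Finset.mem_insert.1 hy with hya | hyt
    · exact Or.inl (by rw [hxa, hya])
    · exact hxa ▸ (h y hyt).symm
    · exact hya ▸ h x hxt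
    · exact ht.2 x hxt y hyt

variable [Fintype V]

lemma chainAcyclic_orderComplex_of_comparable {X : Set V} (a : V) (ha : a ∈ X)
    (h : ∀ x ∈ X, x ≤ a ∨ a ≤ x) : ChainAcyclic R (orderComplex X) :=
  chainAcyclic_of_cone (isChainComplex_orderComplex X) a fun _ ht =>
    insert_mem_orderComplex ht ha fun x hx => h x (ht.1 x hx)

lemma chainAcyclic_orderComplex_insert {X : Set V} {x b : V} (hx : x ∉ X) (hb : b ∈ X)
    (hxb : x ≤ b) (h : ∀ y ∈ X, y ≤ x ∨ x ≤ y → y ≤ b ∨ b ≤ y)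
    (hX : ChainAcyclic R (orderComplex X)) : ChainAcyclic R (orderComplex (insert x X)) := by
  set S : Set (Finset V) := {t | insert x t ∈ orderComplex (insert x X)} with hS
  have hSc : IsChainComplex S :=
    ⟨fun t ht y hy z hz => ht.2 y (by simp [hy]) z (by simp [hz]), fun t ht s hs =>
      (isChainComplex_orderComplex _).down _ ht _ (Finset.insert_subset_insert x hs)⟩
  have hun : orderComplex (insert x X) = orderComplex X ∪ S := by
    ext t
    constructor
    · intro ht
      by_cases hxt : x ∈ t
      · right
        simpa [hS, Finset.insert_eq_self.2 hxt] using ht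
      · left
        refine ⟨fun y hy => ?_, ht.2⟩
        rcases ht.1 y hy with rfl | h'
        exacts [absurd hy hxt, h']
    · rintro (ht | ht)
      · exact ⟨fun y hy => Or.inr (ht.1 y hy), ht.2⟩
      · exact (isChainComplex_orderComplex _).down _ ht _ (Finset.subset_insert x t)
  rw [hun]
  refine chainAcyclic_union (isChainComplex_orderComplex X) hSc hX ?_ ?_
  · exact chainAcyclic_of_cone hSc x fun t ht => by simpa [hS] using ht
  · refine chainAcyclic_of_cone (a := b) ⟨fun t ht => ht.1.2, fun t ht s hs =>
      ⟨(isChainComplex_orderComplex X).down t ht.1 s hs, hSc.down t ht.2 s hs⟩⟩ ?_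
    rintro t ⟨ht, htS⟩
    have hcmp : ∀ y ∈ t, y ≤ b ∨ b ≤ y := fun y hy =>
      h y (ht.1 y hy) (htS.2 y (by simp [hy]) x (by simp))
    refine ⟨insert_mem_orderComplex ht hb hcmp, ?_⟩
    change insert x (insert b t) ∈ orderComplex (insert x X)
    rw [Finset.insert_comm]
    refine insert_mem_orderComplex htS (Or.inr hb) fun y hy => ?_
    rcases Finset.mem_insert.1 hy with rfl | hy
    exacts [Or.inl hxb, hcmp y hy]

/-- A poset that is conically contractible through a closure operator has an acyclic
order complex. -/
lemma chainAcyclic_orderComplex_of_closure {X : Set V} (c : V → V) (a : V) (ha : a ∈ X)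
    (hc : Monotone c) (hle : ∀ x, x ≤ c x) (hcc : ∀ x, c (c x) = c x) (hca : c a = a)
    (hcX : ∀ x ∈ X, c x ∈ X) (hac : ∀ x ∈ X, a ≤ c x) : ChainAcyclic R (orderComplex X) := by
  have key : ∀ (m : ℕ) (W : Finset V), W.card = m → (∀ w ∈ W, c w ≠ w ∧ w ∈ X) →
      ChainAcyclic R (orderComplex ({x | x ∈ X ∧ c x = x} ∪ (W : Set V))) := by
    intro m
    induction m with
    | zero =>
      intro W hW _
      rw [Finset.card_eq_zero] at hW
      subst hW
      refine chainAcyclic_orderComplex_of_comparable a (by simp [ha, hca]) ?_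
      rintro x (⟨hx, hx'⟩ | hx)
      · right
        rw [← hx']
        exact hac x hx
      · simp at hx
    | succ m ih =>
      intro W hW hWX
      obtain ⟨x, hxmax⟩ := W.exists_maximal (Finset.card_pos.1 (by omega))
      have hxW := hxmax.prop
      have h1 := ih (W.erase x) (by rw [Finset.card_erase_of_mem hxW]; omega)
        fun w hw => hWX w (Finset.mem_of_mem_erase hw)
      have heq : {x | x ∈ X ∧ c x = x} ∪ (W : Set V) =
          insert x ({x | x ∈ X ∧ c x = x} ∪ ((W.erase x : Finset V) : Set V)) := by
        ext y
        by_cases hy : y = x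
        · subst hy; simp [hxW]
        · simp [hy]
      rw [heq]
      refine chainAcyclic_orderComplex_insert (b := c x) ?_ ?_ (hle x) ?_ h1
      · simp [(hWX x hxW).1]
      · simp [hcX x (hWX x hxW).2, hcc]
      · rintro y (⟨hy, hy'⟩ | hy) hxy
        · rcases hxy with h | h
          · exact Or.inl (h.trans (hle x))
          · right
            rw [← hy']
            exact hc h
        · rcases hxy with h | h
          · exact Or.inl (h.trans (hle x))
          · exfalso
            have hy2 := Finset.mem_erase.1 (Finset.mem_coe.1 hy)
            exact hy2.1 (le_antisymm (hxmax.le_of_ge hy2.2 h) h)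
  have h := key _ (Finset.univ.filter fun x => c x ≠ x ∧ x ∈ X) rfl (by simp)
  convert h using 2
  ext x
  by_cases hx : c x = x <;> simp [hx]

end OrderComplexLemmas

section Nonevasive

variable {E : Type} [Fintype E] {R : Type*} [CommRing R]

/-- The order complex of the nonempty faces of a simplicial complex whose membership is decided
by a decision tree with fewer queries than there are variables is acyclic. -/
lemma chainAcyclic_of_decisionTree (T : DecisionTree E) : ∀ (S B : Finset E) (F : Set (Finset E)),
    Disjoint S B → (∀ A ⊆ S, A ∈ F ↔ T.eval (fun e => decide (e ∈ A ∪ B)) = true) →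
    (∀ A A', A ⊆ A' → A' ∈ F → A ∈ F) → ∅ ∈ F → T.depth < S.card →
    ChainAcyclic R (orderComplex {A | A ⊆ S ∧ A ∈ F ∧ A.Nonempty}) := by
  induction T with
  | leaf b =>
    intro S B F _ hF _ h0 hd
    have hb : b = true := by simpa [DecisionTree.eval] using (hF ∅ (by simp)).1 h0
    refine chainAcyclic_orderComplex_of_comparable S ⟨subset_rfl, ?_, ?_⟩ fun x hx => Or.inl hx.1
    · exact (hF S subset_rfl).2 (by simp [DecisionTree.eval, hb])
    · exact Finset.card_pos.1 (by simpa [DecisionTree.depth] using hd)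
  | node v l r ihl ihr =>
    intro S B F hSB hF hmono h0 hd
    simp only [DecisionTree.depth] at hd
    have hl : l.depth + 1 < S.card := by omega
    have hr : r.depth + 1 < S.card := by omega
    by_cases hv : v ∈ S
    · have hvB : v ∉ B := Finset.disjoint_left.1 hSB hv
      have hcard : (S.erase v).card + 1 = S.card := Finset.card_erase_add_one hv
      have hD : ChainAcyclic R (orderComplex {A | A ⊆ S.erase v ∧ A ∈ F ∧ A.Nonempty}) := by
        refine ihr _ B F (hSB.mono_left (Finset.erase_subset _ _)) (fun A hA => ?_) hmono h0
          (by omega)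
        have hvA : v ∉ A := fun h => by simpa using hA h
        rw [hF A (hA.trans (Finset.erase_subset _ _))]
        simp [DecisionTree.eval, hvA, hvB]
      by_cases hvF : {v} ∈ F
      · have hL : ChainAcyclic R
            (orderComplex {A | A ⊆ S.erase v ∧ insert v A ∈ F ∧ A.Nonempty}) := by
          refine ihl _ (insert v B) {A | insert v A ∈ F} ?_ (fun A hA => ?_)
            (fun A A' hA hA' => hmono _ _ (Finset.insert_subset_insert v hA) hA') (by simpa using hvF)
            (by omega)
          · rw [Finset.disjoint_insert_right]
            exact ⟨by simp, hSB.mono_left (Finset.erase_subset _ _)⟩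
          · have h1 : insert v A ⊆ S :=
              Finset.insert_subset hv (hA.trans (Finset.erase_subset _ _))
            have h2 : insert v A ∪ B = A ∪ insert v B := by
              ext; simp only [Finset.mem_union, Finset.mem_insert]; tauto
            rw [Set.mem_ofPred_eq, hF _ h1, h2]
            simp [DecisionTree.eval]
        have hSt : ChainAcyclic R (orderComplex {A | A ⊆ S ∧ insert v A ∈ F ∧ A.Nonempty}) := by
          refine chainAcyclic_orderComplex_of_closure (fun A => insert v A) {v} ?_ ?_ ?_ ?_ ?_ ?_ ?_
          · simpa [hv] using hvF
          · exact fun A A' h => Finset.insert_subset_insert v h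
          · exact fun A => Finset.subset_insert v A
          · simp
          · simp
          · rintro A ⟨h1, h2, _⟩
            exact ⟨Finset.insert_subset hv h1, by simpa using h2, by simp⟩
          · intro A _
            simp
        have hun : orderComplex {A | A ⊆ S ∧ A ∈ F ∧ A.Nonempty} =
            orderComplex {A | A ⊆ S.erase v ∧ A ∈ F ∧ A.Nonempty} ∪
            orderComplex {A | A ⊆ S ∧ insert v A ∈ F ∧ A.Nonempty} := by
          ext t
          constructor
          · rintro ⟨h1, h2⟩
            by_cases hex : ∃ A ∈ t, v ∈ A
            · obtain ⟨A, hA, hvA⟩ := hex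
              refine Or.inr ⟨fun A' hA' => ⟨(h1 A' hA').1, ?_, (h1 A' hA').2.2⟩, h2⟩
              rcases h2 A hA A' hA' with h | h
              · rw [Finset.insert_eq_self.2 (h hvA)]
                exact (h1 A' hA').2.1
              · exact hmono _ A (Finset.insert_subset hvA h) (h1 A hA).2.1
            · push Not at hex
              refine Or.inl ⟨fun A hA => ⟨?_, (h1 A hA).2⟩, h2⟩
              exact Finset.subset_erase.2 ⟨(h1 A hA).1, hex A hA⟩
          · rintro (⟨h1, h2⟩ | ⟨h1, h2⟩)
            · exact ⟨fun A hA => ⟨(h1 A hA).1.trans (Finset.erase_subset _ _), (h1 A hA).2⟩, h2⟩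
            · exact ⟨fun A hA => ⟨(h1 A hA).1, hmono _ _ (Finset.subset_insert v A) (h1 A hA).2.1,
                (h1 A hA).2.2⟩, h2⟩
        rw [hun]
        refine chainAcyclic_union (isChainComplex_orderComplex _) (isChainComplex_orderComplex _)
          hD hSt ?_
        convert hL using 1
        ext t
        constructor
        · rintro ⟨⟨h1, h2⟩, h3, _⟩
          exact ⟨fun A hA => ⟨(h1 A hA).1, (h3 A hA).2⟩, h2⟩
        · rintro ⟨h1, h2⟩
          exact ⟨⟨fun A hA => ⟨(h1 A hA).1, hmono _ _ (Finset.subset_insert v A) (h1 A hA).2.1,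
            (h1 A hA).2.2⟩, h2⟩, fun A hA => ⟨(h1 A hA).1.trans (Finset.erase_subset _ _),
            (h1 A hA).2⟩, h2⟩
      · convert hD using 2
        ext A
        simp only [Set.mem_ofPred_eq, Finset.subset_erase]
        constructor
        · rintro ⟨h1, h2, h3⟩
          exact ⟨⟨h1, fun h => hvF (hmono _ A (by simpa using h) h2)⟩, h2, h3⟩
        · rintro ⟨⟨h1, _⟩, h2⟩
          exact ⟨h1, h2⟩
    · by_cases hvB : v ∈ B
      · refine ihl S B F hSB (fun A hA => ?_) hmono h0 (by omega)
        rw [hF A hA]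
        simp [DecisionTree.eval, hvB]
      · refine ihr S B F hSB (fun A hA => ?_) hmono h0 (by omega)
        have hvA : v ∉ A := fun h => hv (hA h)
        rw [hF A hA]
        simp [DecisionTree.eval, hvB, hvA]

end Nonevasive

section SmithTheory

/-- The homological algebra behind Smith theory: if `ker (α b) = im (α (!b)) ⊕ N` inside an
exact complex `C`, then the subcomplex `N` is exact. -/
lemma exact_of_complementary_kernels {R M : Type*} [CommRing R] [AddCommGroup M] [Module R M]
    (C N : Submodule R M) (d : M →ₗ[R] M) (F : ℕ → Submodule R M) (m : ℕ)
    (α : Bool → M →ₗ[R] M)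
    (hNC : N ≤ C) (hdC : ∀ x ∈ C, d x ∈ C) (hdN : ∀ x ∈ N, d x ∈ N)
    (hdd : ∀ x ∈ C, d (d x) = 0)
    (hF0 : F 0 = ⊤) (hFm : F m = ⊥)
    (hex : ∀ k, ∀ z ∈ C, z ∈ F k → d z = 0 → ∃ c ∈ C, c ∈ F (k + 1) ∧ d c = z)
    (hαd : ∀ b x, α b (d x) = d (α b x))
    (hαF : ∀ b k, ∀ x ∈ F k, α b x ∈ F k)
    (hαα : ∀ b x, α (!b) (α b x) = 0)
    (hαC : ∀ b, ∀ x ∈ C, α b x ∈ C)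
    (hαN : ∀ b, ∀ x ∈ N, α b x = 0)
    (hker : ∀ b, ∀ x ∈ C, α (!b) x = 0 → ∃ u ∈ C, ∃ v ∈ N, x = α b u + v)
    (hdis : ∀ b x, α b x ∈ N → α b x = 0) :
    ∀ z ∈ N, d z = 0 → ∃ v ∈ N, d v = z := by
  have key : ∀ j k, k + j = m → ∀ b, ∀ u ∈ C, ∀ y ∈ N, α b u + y ∈ F k → d (α b u) = 0 →
      d y = 0 → ∃ u' ∈ C, ∃ v ∈ N, d (α b u') = α b u ∧ d v = y := by
    intro j
    induction j with
    | zero =>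
      intro k hk b u hu y hy hF _ _
      obtain rfl : k = m := by omega
      rw [hFm, Submodule.mem_bot] at hF
      have h1 : α b u = -y := eq_neg_of_add_eq_zero_left hF
      have h2 : α b u = 0 := hdis b u (h1 ▸ neg_mem hy)
      exact ⟨0, zero_mem _, 0, zero_mem _, by simp [h2], by rw [h2, zero_add] at hF; simp [hF]⟩
    | succ j ih =>
      intro k hk b u hu y hy hF hdu hdy
      obtain ⟨c, hc, hcF, hdc⟩ := hex k _ (add_mem (hαC b u hu) (hNC hy)) hF (by simp [hdu, hdy])
      obtain ⟨u₁, hu₁, v₁, hv₁, h1, -⟩ := ih (k + 1) (by omega) (!b) c hc 0 (zero_mem _)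
        (by simpa using hαF (!b) _ c hcF)
        (by rw [← hαd, hdc, map_add, hαα, hαN _ y hy, add_zero]) (by simp)
      obtain ⟨u₂, hu₂, v₂, hv₂, h2⟩ := hker b (c - d u₁) (sub_mem hc (hdC _ hu₁))
        (by rw [map_sub, hαd, h1, sub_self])
      have h3 : d (α b u₂) + d v₂ = α b u + y := by
        rw [← hdc, ← map_add, ← h2, map_sub, hdd _ hu₁, sub_zero]
      have h4 : α b (d u₂ - u) = y - d v₂ := by
        rw [map_sub, hαd, sub_eq_sub_iff_add_eq_add, h3, add_comm]
      have h5 := hdis b (d u₂ - u) (h4 ▸ sub_mem hy (hdN _ hv₂))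
      refine ⟨u₂, hu₂, v₂, hv₂, ?_, ?_⟩
      · rw [← hαd]
        rwa [map_sub, sub_eq_zero] at h5
      · rw [h5] at h4
        exact (sub_eq_zero.1 h4.symm).symm
  intro z hz hdz
  obtain ⟨_, _, v, hv, _, h⟩ := key m 0 (by omega) true 0 (zero_mem _) z hz (by simp [hF0])
    (by simp) hdz
  exact ⟨v, hv, h⟩

variable {T : Type*} {p : ℕ}

lemma pow_apply_injOn_of_prime (hp : p.Prime) {G : Equiv.Perm T} (hG : G ^ p = 1) {t : T}
    (ht : G t ≠ t) {i j : ℕ} (hi : i < p) (hj : j < p) (h : (G ^ i) t = (G ^ j) t) : i = j := by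
  wlog hij : i ≤ j generalizing i j
  · exact (this hj hi h.symm (by omega)).symm
  by_contra hne
  apply ht
  have h1 : Function.IsPeriodicPt G (j - i) t := by
    have : (G ^ i) ((G ^ (j - i)) t) = (G ^ i) t := by
      rw [← Equiv.Perm.mul_apply, ← pow_add, h]
      congr 2; omega
    have h' := (G ^ i).injective this
    rwa [← Equiv.Perm.iterate_eq_pow] at h'
  have h2 : Function.IsPeriodicPt G p t := by
    change G^[p] t = t
    rw [Equiv.Perm.iterate_eq_pow, hG]; rfl
  have h3 := h1.gcd h2
  have h4 : Nat.gcd (j - i) p = 1 :=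
    (Nat.Coprime.symm ((Nat.Prime.coprime_iff_not_dvd hp).2
      (Nat.not_dvd_of_pos_of_lt (by omega) (by omega))))
  rw [h4] at h3
  exact h3

/-- A permutation of prime order admits a fundamental domain on its non-fixed points. -/
lemma exists_fundamentalDomain (hp : p.Prime) {G : Equiv.Perm T} (hG : G ^ p = 1) :
    ∃ e : T → ZMod p, ∀ t, G t ≠ t → ∑ j ∈ Finset.range p, e ((G ^ j) t) = 1 := by
  let rep : T → T := fun t => (Quotient.mk (Equiv.Perm.SameCycle.setoid G) t).out
  have hrep : ∀ t, G.SameCycle (rep t) t := fun t =>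
    Quotient.exact (s := Equiv.Perm.SameCycle.setoid G) (Quotient.out_eq _)
  have hrep' : ∀ s t, G.SameCycle s t → rep s = rep t := fun s t h => by
    simp only [rep]
    rw [Quotient.sound (s := Equiv.Perm.SameCycle.setoid G) h]
  refine ⟨fun t => if rep t = t then 1 else 0, fun t ht => ?_⟩
  obtain ⟨i, hi⟩ := (hrep t).symm
  have hp0 : (p : ℤ) ≠ 0 := by exact_mod_cast hp.ne_zero
  obtain ⟨j, hj⟩ := Int.eq_ofNat_of_zero_le (Int.emod_nonneg i hp0)
  have hjp : j < p := by
    have := Int.emod_lt_of_pos i (b := (p : ℤ)) (by exact_mod_cast hp.pos)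
    omega
  have hGj : (G ^ j) t = rep t := by
    rw [← hi, ← Int.emod_add_mul_ediv i p, hj, zpow_add, zpow_mul]
    simp [hG]
  have hsc : ∀ j : ℕ, rep ((G ^ j) t) = rep t := fun j =>
    (hrep' _ _ ⟨j, by simp⟩).symm
  rw [Finset.sum_eq_single j]
  · exact if_pos (by rw [hsc, hGj])
  · intro i hi' hne
    refine if_neg ?_
    rw [hsc, ← hGj]
    exact fun h => hne (pow_apply_injOn_of_prime hp hG ht (Finset.mem_range.1 hi') hjp h.symm)
  · simp [hjp]

lemma exists_norm_add_of_invariant (hp : p.Prime) {G : Equiv.Perm T} (hG : G ^ p = 1) {K : Set T}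
    {f : T → ZMod p} (hf : f ∈ supportedOn (ZMod p) K) (hinv : ∀ t, f (G t) = f t) :
    ∃ u ∈ supportedOn (ZMod p) K, ∃ v ∈ supportedOn (ZMod p) {t | t ∈ K ∧ G t = t},
      ∀ t, f t = ∑ j ∈ Finset.range p, u ((G ^ j) t) + v t := by
  obtain ⟨e, he⟩ := exists_fundamentalDomain hp hG
  have hinv' : ∀ (j : ℕ) t, f ((G ^ j) t) = f t := by
    intro j
    induction j with
    | zero => simp
    | succ j ih => intro t; rw [pow_succ, Equiv.Perm.mul_apply, ih, hinv]
  have hfix : ∀ (j : ℕ) t, G ((G ^ j) t) = (G ^ j) t ↔ G t = t := by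
    intro j t
    rw [← Equiv.Perm.mul_apply, ← pow_succ', pow_succ, Equiv.Perm.mul_apply]
    exact (G ^ j).injective.eq_iff
  refine ⟨fun t => if G t = t then 0 else e t * f t, fun t ht => by simp [hf t ht],
    fun t => if G t = t then f t else 0, ?_, ?_⟩
  · intro t ht
    by_cases h : G t = t
    · have : t ∉ K := fun h' => ht ⟨h', h⟩
      simp [hf t this]
    · simp [h]
  · intro t
    by_cases h : G t = t
    · simp [hfix, h]
    · simp [hfix, h, hinv', ← Finset.sum_mul, he t h]

lemma exists_sub_add_of_norm_eq_zero (hp : p.Prime) {G : Equiv.Perm T} (hG : G ^ p = 1) {K : Set T}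
    (hK : ∀ t, G t ∈ K → t ∈ K) {f : T → ZMod p} (hf : f ∈ supportedOn (ZMod p) K)
    (hnorm : ∀ t, ∑ j ∈ Finset.range p, f ((G ^ j) t) = 0) :
    ∃ u ∈ supportedOn (ZMod p) K, ∃ v ∈ supportedOn (ZMod p) {t | t ∈ K ∧ G t = t},
      ∀ t, f t = u t - u (G t) + v t := by
  obtain ⟨e, he⟩ := exists_fundamentalDomain hp hG
  have hK' : ∀ (j : ℕ) t, (G ^ j) t ∈ K → t ∈ K := by
    intro j
    induction j with
    | zero => simp
    | succ j ih => intro t h; rw [pow_succ, Equiv.Perm.mul_apply] at h; exact hK t (ih _ h)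
  refine ⟨fun t => -∑ j ∈ Finset.range p, ∑ i ∈ Finset.range j,
      e ((G ^ i) t) * f ((G ^ (p - j)) ((G ^ i) t)), ?_,
    fun t => if G t = t then f t else 0, ?_, ?_⟩
  · intro t ht
    have : ∀ i j : ℕ, f ((G ^ j) ((G ^ i) t)) = 0 := fun i j =>
      hf _ fun h => ht (hK' i t (hK' j _ h))
    simp [this]
  · intro t ht
    by_cases h : G t = t
    · have : t ∉ K := fun h' => ht ⟨h', h⟩
      simp [hf t this]
    · simp [h]
  · intro t
    by_cases h : G t = t
    · simp [h]
    have hshift : ∀ i : ℕ, (G ^ i) (G t) = (G ^ (i + 1)) t := fun i => by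
      rw [pow_succ, Equiv.Perm.mul_apply]
    simp only [hshift, if_neg h, add_zero]
    rw [neg_sub_neg, ← Finset.sum_sub_distrib]
    have h1 : ∀ j ∈ Finset.range p, (∑ i ∈ Finset.range j,
        e ((G ^ (i + 1)) t) * f ((G ^ (p - j)) ((G ^ (i + 1)) t)) - ∑ i ∈ Finset.range j,
        e ((G ^ i) t) * f ((G ^ (p - j)) ((G ^ i) t))) =
        e ((G ^ j) t) * f t - e t * f ((G ^ (p - j)) t) := by
      intro j hj
      rw [← Finset.sum_sub_distrib,
        Finset.sum_range_sub (fun i => e ((G ^ i) t) * f ((G ^ (p - j)) ((G ^ i) t)))]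
      have : (G ^ (p - j)) ((G ^ j) t) = t := by
        rw [← Equiv.Perm.mul_apply, ← pow_add,
          Nat.sub_add_cancel (Finset.mem_range.1 hj).le, hG]
        rfl
      simp [this]
    rw [Finset.sum_congr rfl h1, Finset.sum_sub_distrib, ← Finset.sum_mul, he t h,
      ← Finset.mul_sum]
    have h2 : ∑ j ∈ Finset.range p, f ((G ^ (p - j)) t) = 0 := by
      rw [← Finset.sum_range_reflect, ← hnorm (G t)]
      refine Finset.sum_congr rfl fun j hj => ?_
      rw [hshift]
      congr 3
      have := Finset.mem_range.1 hj
      omega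
    rw [h2]
    ring

end SmithTheory

section OrderIsoAction

variable {W : Type*} [PartialOrder V] [PartialOrder W]

lemma incidenceSign_map {R : Type*} [CommRing R] (e : V ≃o W) (x : V) (t : Finset V) :
    incidenceSign R (e x) (t.map e.toEquiv.toEmbedding) = incidenceSign R x t := by
  simp only [incidenceSign]
  rw [Finset.filter_map, Finset.card_map]
  congr 3
  ext y
  simp

lemma OrderIso.apply_eq_of_le_of_finite [Finite V] (g : V ≃o V) {x : V} (h : x ≤ g x) :
    g x = x := by
  obtain ⟨n, hn, hx⟩ := Function.mem_periodicPts.1 (g.injective.mem_periodicPts x)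
  have h1 := g.monotone.monotone_iterate_of_le_map h (Nat.succ_le_of_lt hn)
  simp only [Nat.succ_eq_add_one, zero_add, Function.iterate_one] at h1
  exact le_antisymm (h1.trans hx.le) h

lemma map_eq_self_iff_of_chain [Finite V] (g : V ≃o V) {t : Finset V}
    (ht : ∀ x ∈ t, ∀ y ∈ t, x ≤ y ∨ y ≤ x) :
    t.map g.toEquiv.toEmbedding = t ↔ ∀ x ∈ t, g x = x := by
  constructor
  · intro h x hx
    have hgx : g x ∈ t := by
      rw [← h]; simp [hx]
    rcases ht x hx _ hgx with h' | h'
    · exact g.apply_eq_of_le_of_finite h'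
    · have := g.symm.apply_eq_of_le_of_finite (x := g x) (by simpa using h')
      simpa using this.symm
  · intro h
    ext x
    simp only [Finset.mem_map_equiv]
    constructor
    · intro hx
      have h2 : g (g.symm x) = g.symm x := h _ hx
      rw [g.apply_symm_apply] at h2
      rw [h2]
      exact hx
    · intro hx
      have h2 : g.symm x = x := by rw [g.symm_apply_eq, h x hx]
      change g.symm x ∈ t
      rwa [h2]

lemma map_mem_orderComplex_iff (e : V ≃o W) {X : Set W} {t : Finset V} :
    t.map e.toEquiv.toEmbedding ∈ orderComplex X ↔ t ∈ orderComplex (e ⁻¹' X) := by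
  constructor
  · rintro ⟨h1, h2⟩
    refine ⟨fun x hx => h1 (e x) (by simpa using hx), fun x hx y hy => ?_⟩
    simpa using h2 (e x) (by simpa using hx) (e y) (by simpa using hy)
  · rintro ⟨h1, h2⟩
    refine ⟨fun x hx => ?_, fun x hx y hy => ?_⟩
    · simpa using h1 (e.symm x) (by simpa using hx)
    · simpa using h2 (e.symm x) (by simpa using hx) (e.symm y) (by simpa using hy)

variable [Fintype V] [Fintype W]

lemma chainBoundary_comp_map {R : Type*} [CommRing R] (e : V ≃o W) (f : Finset W → R)
    (t : Finset V) :
    chainBoundary R V (fun s => f (s.map e.toEquiv.toEmbedding)) t =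
      chainBoundary R W f (t.map e.toEquiv.toEmbedding) := by
  rw [chainBoundary_apply, chainBoundary_apply]
  refine Finset.sum_equiv e.toEquiv (fun x => by simp) fun x _ => ?_
  have h := incidenceSign_map (R := R) e x t
  rw [Finset.map_insert]
  simp only [Equiv.coe_toEmbedding, RelIso.coe_fn_toEquiv] at h ⊢
  rw [h]

lemma ChainAcyclic.preimage {R : Type*} [CommRing R] (e : V ≃o W) {X : Set W}
    (h : ChainAcyclic R (orderComplex X)) : ChainAcyclic R (orderComplex (e ⁻¹' X)) := by
  have hes : ∀ t : Finset V, (t.map e.toEquiv.toEmbedding).map e.symm.toEquiv.toEmbedding = t := by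
    intro t; ext; simp
  have hse : ∀ t : Finset W, (t.map e.symm.toEquiv.toEmbedding).map e.toEquiv.toEmbedding = t := by
    intro t; ext; simp
  intro f hf hdf
  obtain ⟨u, hu, hdu⟩ := h (fun s => f (s.map e.symm.toEquiv.toEmbedding))
    (fun t ht => hf _ fun h' => ht (by rwa [← map_mem_orderComplex_iff, hse] at h'))
    (by ext t; rw [chainBoundary_comp_map, hdf]; rfl)
  refine ⟨fun s => u (s.map e.toEquiv.toEmbedding), fun t ht => hu _ fun h' =>
    ht ((map_mem_orderComplex_iff e).1 h'), ?_⟩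
  ext t
  rw [chainBoundary_comp_map, hdu]
  exact congrArg f (hes t)

lemma orderComplex_fixed (g : V ≃o V) (X : Set V) :
    orderComplex {x | x ∈ X ∧ g x = x} =
      {t | t ∈ orderComplex X ∧ t.map g.toEquiv.toEmbedding = t} := by
  ext t
  constructor
  · rintro ⟨h1, h2⟩
    exact ⟨⟨fun x hx => (h1 x hx).1, h2⟩, (map_eq_self_iff_of_chain g h2).2 fun x hx => (h1 x hx).2⟩
  · rintro ⟨⟨h1, h2⟩, h3⟩
    exact ⟨fun x hx => ⟨h1 x hx, (map_eq_self_iff_of_chain g h2).1 h3 x hx⟩, h2⟩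

/-- An acyclic complex is acyclic degree by degree. -/
lemma ChainAcyclic.exists_card_le {R : Type*} [CommRing R] {K : Set (Finset V)}
    (h : ChainAcyclic R K) (k : ℕ) {f : Finset V → R} (hf : f ∈ supportedOn R K)
    (hfk : f ∈ supportedOn R {t : Finset V | k ≤ t.card}) (hdf : chainBoundary R V f = 0) :
    ∃ c ∈ supportedOn R K, c ∈ supportedOn R {t : Finset V | k + 1 ≤ t.card} ∧
      chainBoundary R V c = f := by
  obtain ⟨c, hc, hdc⟩ := h f hf hdf
  refine ⟨fun t => if k + 1 ≤ t.card then c t else 0, fun t ht => by simp [hc t ht],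
    fun t ht => if_neg ht, ?_⟩
  ext t
  by_cases ht : k ≤ t.card
  · rw [← hdc, chainBoundary_apply, chainBoundary_apply]
    refine Finset.sum_congr rfl fun x hx => ?_
    rw [if_pos]
    rw [Finset.card_insert_of_notMem (Finset.mem_compl.1 hx)]
    omega
  · rw [hfk t ht, chainBoundary_apply]
    refine Finset.sum_eq_zero fun x hx => ?_
    rw [if_neg, mul_zero]
    rw [Finset.card_insert_of_notMem (Finset.mem_compl.1 hx)]
    omega

/-- Smith's theorem for order complexes: the fixed points of an automorphism of prime order `p`
of a mod-`p` acyclic finite poset form a mod-`p` acyclic poset. -/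
theorem ChainAcyclic.fixed {p : ℕ} (hp : p.Prime) (g : V ≃o V) (hg : ∀ x, g^[p] x = x)
    {X : Set V} (hgX : ∀ x, g x ∈ X ↔ x ∈ X) (h : ChainAcyclic (ZMod p) (orderComplex X)) :
    ChainAcyclic (ZMod p) (orderComplex {x | x ∈ X ∧ g x = x}) := by
  set G : Equiv.Perm (Finset V) := g.toEquiv.finsetCongr with hGdef
  have hGapp : ∀ t, G t = t.map g.toEquiv.toEmbedding := fun t => rfl
  have hGpow : ∀ (j : ℕ) t x, x ∈ t → g^[j] x ∈ (G ^ j) t := by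
    intro j
    induction j with
    | zero => simp
    | succ j ih =>
      intro t x hx
      rw [Function.iterate_succ_apply, pow_succ, Equiv.Perm.mul_apply]
      exact ih _ _ (by rw [hGapp]; simp [hx])
  have hGp : G ^ p = 1 := by
    ext1 t
    refine (Finset.eq_of_subset_of_card_le (fun x hx => ?_) ?_).symm
    · have := hGpow p t x hx
      rwa [hg x] at this
    · have : ∀ j : ℕ, ((G ^ j) t).card = t.card := by
        intro j
        induction j with
        | zero => simp
        | succ j ih => rw [pow_succ', Equiv.Perm.mul_apply, hGapp, Finset.card_map, ih]
      exact (this p).le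
  set K := orderComplex X with hK
  have hKc := isChainComplex_orderComplex X
  have hGK : ∀ t, G t ∈ K ↔ t ∈ K := by
    intro t
    rw [hGapp, hK, map_mem_orderComplex_iff]
    have : g ⁻¹' X = X := by ext x; exact hgX x
    rw [this]
  have hGKj : ∀ (j : ℕ) t, (G ^ j) t ∈ K ↔ t ∈ K := by
    intro j
    induction j with
    | zero => simp
    | succ j ih => intro t; rw [pow_succ, Equiv.Perm.mul_apply, ih, hGK]
  have hGcard : ∀ (j : ℕ) t, ((G ^ j) t).card = t.card := by
    intro j
    induction j with
    | zero => simp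
    | succ j ih => intro t; rw [pow_succ, Equiv.Perm.mul_apply, ih, hGapp, Finset.card_map]
  let γ : ℕ → (Finset V → ZMod p) →ₗ[ZMod p] (Finset V → ZMod p) := fun j =>
    LinearMap.funLeft (ZMod p) (ZMod p) ((G ^ j : Equiv.Perm (Finset V)) : Finset V → Finset V)
  have hγ : ∀ j f t, γ j f t = f ((G ^ j) t) := fun _ _ _ => rfl
  let α : Bool → (Finset V → ZMod p) →ₗ[ZMod p] (Finset V → ZMod p) := fun b =>
    if b then ∑ j ∈ Finset.range p, γ j else γ 0 - γ 1
  have hαt : ∀ f t, α true f t = ∑ j ∈ Finset.range p, f ((G ^ j) t) := by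
    intro f t
    simp [α, LinearMap.sum_apply, Finset.sum_apply, hγ]
  have hαf : ∀ f t, α false f t = f t - f (G t) := by
    intro f t
    simp [α, hγ]
  have hγd : ∀ j f, γ j (chainBoundary _ V f) = chainBoundary _ V (γ j f) := by
    intro j
    induction j with
    | zero => intro f; rfl
    | succ j ih =>
      intro f
      have hs : ∀ f, γ (j + 1) f = γ 1 (γ j f) := fun f => by
        ext t
        simp only [hγ, pow_succ, pow_zero, one_mul, Equiv.Perm.mul_apply]
      rw [hs, hs, ih]
      ext t
      rw [hγ, pow_one, hGapp, ← chainBoundary_comp_map]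
      rfl
  have hsum : ∀ (f : Finset V → ZMod p) (t : Finset V),
      ∑ j ∈ Finset.range p, f ((G ^ j) (G t)) = ∑ j ∈ Finset.range p, f ((G ^ j) t) := by
    intro f t
    have h1 : ∀ j : ℕ, (G ^ j) (G t) = (G ^ (j + 1)) t := fun j => by
      rw [pow_succ, Equiv.Perm.mul_apply]
    simp only [h1]
    have h2 := Finset.sum_range_succ (fun j => f ((G ^ j) t)) p
    rw [Finset.sum_range_succ'] at h2
    simpa [hGp] using h2
  have hfixpow : ∀ (j : ℕ) t, G t = t → (G ^ j) t = t := by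
    intro j t ht
    induction j with
    | zero => rfl
    | succ j ih => rw [pow_succ, Equiv.Perm.mul_apply, ht, ih]
  have hαfix : ∀ b f t, G t = t → α b f t = 0 := by
    intro b f t ht
    cases b
    · rw [hαf, ht, sub_self]
    · rw [hαt, Finset.sum_congr rfl fun j _ => by rw [hfixpow j t ht]]
      simp
  have hαsupp : ∀ b (S : Set (Finset V)), (∀ (j : ℕ) t, (G ^ j) t ∈ S ↔ t ∈ S) →
      ∀ f ∈ supportedOn (ZMod p) S, α b f ∈ supportedOn (ZMod p) S := by
    intro b S hS f hf t ht
    cases b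
    · rw [hαf, hf t ht, hf (G t) (by simpa using (hS 1 t).not.2 ht), sub_self]
    · rw [hαt]
      exact Finset.sum_eq_zero fun j _ => hf _ ((hS j t).not.2 ht)
  have hN : orderComplex {x | x ∈ X ∧ g x = x} = {t | t ∈ K ∧ G t = t} := orderComplex_fixed g X
  have hNc := isChainComplex_orderComplex {x | x ∈ X ∧ g x = x}
  rw [hN] at hNc ⊢
  refine exact_of_complementary_kernels (supportedOn (ZMod p) K) _ (chainBoundary (ZMod p) V)
    (fun k => supportedOn (ZMod p) {t : Finset V | k ≤ t.card}) (Fintype.card V + 1) α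
    (fun f hf t ht => hf t fun h' => ht h'.1) (fun f hf => chainBoundary_mem hKc hf)
    (fun f hf => chainBoundary_mem hNc hf) (fun f hf => chainBoundary_chainBoundary hKc hf)
    ?_ ?_ (fun k f hf hfk hdf => h.exists_card_le k hf hfk hdf) ?_ ?_ ?_
    (fun b => hαsupp b K hGKj) ?_ ?_ ?_
  · exact eq_top_iff.2 fun f _ t ht => absurd (Nat.zero_le _) ht
  · refine eq_bot_iff.2 fun f hf => funext fun t => hf t ?_
    have := t.card_le_univ
    simp only [Set.mem_ofPred_eq]
    omega
  · intro b f
    cases b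
    · simp [α, hγd]
    · simp [α, hγd, LinearMap.sum_apply]
  · exact fun b k => hαsupp b _ fun j t => by simp [hGcard]
  · intro b f
    ext t
    cases b
    · rw [Bool.not_false, hαt]
      simp only [hαf, Finset.sum_sub_distrib]
      have : ∀ j : ℕ, G ((G ^ j) t) = (G ^ j) (G t) := fun j => by
        rw [← Equiv.Perm.mul_apply, ← Equiv.Perm.mul_apply, ← pow_succ', pow_succ]
      simp only [this, hsum, sub_self, Pi.zero_apply]
    · rw [Bool.not_true, hαf, hαt, hαt, hsum, sub_self, Pi.zero_apply]
  · intro b f hf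
    ext t
    by_cases ht : G t = t
    · exact hαfix b f t ht
    · have hz : ∀ j : ℕ, f ((G ^ j) t) = 0 := fun j => hf _ fun h' => ht (by
        have h2 := h'.2
        rw [← Equiv.Perm.mul_apply, ← pow_succ', pow_succ, Equiv.Perm.mul_apply] at h2
        exact (G ^ j).injective h2)
      cases b
      · have h0 := hz 0
        have h1 := hz 1
        rw [pow_zero, Equiv.Perm.one_apply] at h0
        rw [pow_one] at h1
        rw [hαf, h0, h1, sub_self]; rfl
      · rw [hαt]
        exact Finset.sum_eq_zero fun j _ => hz j
  · intro b f hf hz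
    cases b
    · obtain ⟨u, hu, v, hv, huv⟩ := exists_sub_add_of_norm_eq_zero hp hGp
        (fun t => (hGK t).1) hf (fun t => by rw [← hαt]; exact congrFun hz t)
      exact ⟨u, hu, v, hv, funext fun t => by rw [Pi.add_apply, hαf, huv t]⟩
    · obtain ⟨u, hu, v, hv, huv⟩ := exists_norm_add_of_invariant hp hGp hf (fun t => by
        have := congrFun hz t
        rw [Bool.not_true, hαf] at this
        exact (sub_eq_zero.1 this).symm)
      exact ⟨u, hu, v, hv, funext fun t => by rw [Pi.add_apply, hαt, huv t]⟩
  · intro b f hf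
    ext t
    by_cases ht : G t = t
    · exact hαfix b f t ht
    · exact hf t fun h' => ht h'.2

end OrderIsoAction

section Lefschetz

variable [Fintype V] [PartialOrder V]

lemma chainBoundary_comp_ringHom {R S : Type*} [CommRing R] [CommRing S] (φ : R →+* S)
    (f : Finset V → R) (t : Finset V) :
    chainBoundary S V (fun s => φ (f s)) t = φ (chainBoundary R V f t) := by
  simp [chainBoundary_apply, incidenceSign]

/-- Mod-`p` acyclicity implies rational acyclicity. -/
lemma ChainAcyclic.rat {p : ℕ} (hp : p.Prime) {K : Set (Finset V)} (hK : IsChainComplex K)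
    (h : ChainAcyclic (ZMod p) K) : ChainAcyclic ℚ K := by
  have hp0 : (p : ℤ) ≠ 0 := by exact_mod_cast hp.ne_zero
  set Z : Submodule ℤ (Finset V → ℤ) :=
    supportedOn ℤ K ⊓ LinearMap.ker (chainBoundary ℤ V) with hZ
  set B : Submodule ℤ (Finset V → ℤ) := (supportedOn ℤ K).map (chainBoundary ℤ V) with hB
  have hstep : ∀ z ∈ Z, ∃ w ∈ Z, z - (p : ℤ) • w ∈ B := by
    rintro z ⟨hzK, hz⟩
    replace hz : chainBoundary ℤ V z = 0 := hz
    obtain ⟨c, hc, hdc⟩ := h (fun t => Int.castRingHom (ZMod p) (z t))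
      (fun t ht => by simp [hzK t ht])
      (by ext t; rw [chainBoundary_comp_ringHom, hz]; simp)
    choose l hl using fun t => ZMod.intCast_surjective (c t)
    set c' : Finset V → ℤ := fun t => if t ∈ K then l t else 0 with hc'
    have hc'K : c' ∈ supportedOn ℤ K := fun t ht => if_neg ht
    have hcc : (fun t => Int.castRingHom (ZMod p) (c' t)) = c := by
      ext t
      by_cases ht : t ∈ K
      · simp [hc', ht, hl]
      · simp [hc', ht, hc t ht]
    have hdvd : ∀ t, (p : ℤ) ∣ z t - chainBoundary ℤ V c' t := by
      intro t
      rw [← ZMod.intCast_zmod_eq_zero_iff_dvd, Int.cast_sub, sub_eq_zero]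
      have h1 := chainBoundary_comp_ringHom (Int.castRingHom (ZMod p)) c' t
      rw [hcc, hdc] at h1
      exact h1
    choose w hw using hdvd
    have hzw : z - chainBoundary ℤ V c' = (p : ℤ) • w := by
      ext t; simpa using hw t
    refine ⟨w, ⟨fun t ht => ?_, ?_⟩, ?_⟩
    · have h1 := hw t
      rw [hzK t ht, chainBoundary_mem hK hc'K t ht] at h1
      simpa [hp.ne_zero] using h1
    · have h1 : (p : ℤ) • chainBoundary ℤ V w = 0 := by
        rw [← map_smul, ← hzw, map_sub, hz, chainBoundary_chainBoundary hK hc'K, sub_zero]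
      exact (smul_eq_zero.1 h1).resolve_left hp0
    · rw [← hzw, sub_sub_cancel]
      exact ⟨c', hc'K, rfl⟩
  obtain ⟨r, hr, hrZ⟩ := Submodule.exists_sub_one_mem_and_smul_eq_zero_of_fg_of_le_smul
    (Ideal.span {(p : ℤ)}) (Z.map B.mkQ) ((IsNoetherian.noetherian Z).map _) (by
      rintro _ ⟨z, hz, rfl⟩
      obtain ⟨w, hw, hzw⟩ := hstep z hz
      have : B.mkQ z = (p : ℤ) • B.mkQ w := by
        rw [← map_smul]
        exact (Submodule.Quotient.eq B).2 hzw
      rw [this]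
      exact Submodule.smul_mem_smul (Ideal.mem_span_singleton_self _) ⟨w, hw, rfl⟩)
  have hr0 : r ≠ 0 := by
    rintro rfl
    rw [Ideal.mem_span_singleton] at hr
    have h1 : (p : ℤ) ∣ 1 := by simpa using hr
    exact hp.one_lt.ne' (by exact_mod_cast Int.eq_one_of_dvd_one (by positivity) h1)
  intro f hf hdf
  obtain ⟨⟨b, hb⟩, hbf⟩ := IsLocalization.exist_integer_multiples_of_finite
    (nonZeroDivisors ℤ) f
  choose z hz using hbf
  have hb0 : (b : ℚ) ≠ 0 := by exact_mod_cast nonZeroDivisors.ne_zero hb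
  have hz' : ∀ t, ((z t : ℤ) : ℚ) = b * f t := fun t => by simpa using hz t
  have hzZ : z ∈ Z := by
    refine ⟨fun t ht => ?_, ?_⟩
    · have h1 := hz' t
      rw [hf t ht, mul_zero] at h1
      exact_mod_cast h1
    · change chainBoundary ℤ V z = 0
      ext t
      have h1 := chainBoundary_comp_ringHom (Int.castRingHom ℚ) z t
      have h2 : (fun s => (Int.castRingHom ℚ) (z s)) = (b : ℚ) • f := by
        ext s; simpa using hz' s
      rw [h2, map_smul, hdf] at h1
      simpa using h1.symm
  have h1 := hrZ _ ⟨z, hzZ, rfl⟩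
  rw [← map_smul, Submodule.mkQ_apply, Submodule.Quotient.mk_eq_zero] at h1
  obtain ⟨c, hc, hdc⟩ := h1
  have hr0' : (r : ℚ) ≠ 0 := by exact_mod_cast hr0
  refine ⟨((r : ℚ) * b)⁻¹ • fun t => Int.castRingHom ℚ (c t),
    Submodule.smul_mem _ _ fun t ht => by simp [hc t ht], ?_⟩
  rw [map_smul]
  ext t
  rw [Pi.smul_apply, chainBoundary_comp_ringHom, hdc]
  simp only [Pi.smul_apply, smul_eq_mul, map_mul, eq_intCast, hz']
  field_simp

/-- If `D` is an exact differential on the image of the projection `π` and `A` anticommutes with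
`D`, then `A π` has trace zero. -/
lemma trace_mul_eq_zero_of_exact {F M : Type*} [Field F] [AddCommGroup M] [Module F M]
    (π D A : Module.End F M) (hπD : π * D = D) (hDπ : D * π = D)
    (hDD : D * D = 0) (hAD : D * A = -(A * D)) (hAπ : A * π = π * A)
    (hππ : π * π = π) (hex : ∀ x, D x = 0 → ∃ y, D y = π x) :
    LinearMap.trace F M (A * π) = 0 := by
  obtain ⟨s, hs⟩ : ∃ s : Module.End F M, D * s * D = D := by
    obtain ⟨g, hg⟩ := D.rangeRestrict.exists_rightInverse_of_surjective D.range_rangeRestrict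
    obtain ⟨s, hs⟩ := LinearMap.exists_extend g
    refine ⟨s, LinearMap.ext fun x => ?_⟩
    have h1 : s (D x) = g (D.rangeRestrict x) := LinearMap.congr_fun hs (D.rangeRestrict x)
    have h2 := congrArg Subtype.val (LinearMap.congr_fun hg (D.rangeRestrict x))
    simp only [Module.End.mul_apply, h1]
    exact h2
  have hpi : D * s * (π - π * s * D) = π - π * s * D := by
    ext x
    obtain ⟨y, hy⟩ := hex ((π - π * s * D) x) (by
      have : D * (π - π * s * D) = 0 := by
        rw [mul_sub, hDπ, ← mul_assoc, ← mul_assoc, hDπ, hs, sub_self]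
      exact LinearMap.congr_fun this x)
    have h1 : π ((π - π * s * D) x) = (π - π * s * D) x := by
      have : π * (π - π * s * D) = π - π * s * D := by
        rw [mul_sub, hππ, ← mul_assoc, ← mul_assoc, hππ]
      exact LinearMap.congr_fun this x
    rw [h1] at hy
    rw [Module.End.mul_apply, ← hy, ← Module.End.mul_apply, hs]
  have hdec : A * π = A * π * s * D + A * D * s * π - A * D * s * π * s * D := by
    have : π = π * s * D + D * s * (π - π * s * D) := by rw [hpi]; abel
    conv_lhs => rw [this]
    noncomm_ring
  have t1 : LinearMap.trace F M (A * π * s * D) = -LinearMap.trace F M (A * D * s) := by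
    rw [LinearMap.trace_mul_comm, ← mul_assoc, ← mul_assoc, hAD, neg_mul, neg_mul, mul_assoc A, hDπ,
      map_neg]
  have t2 : LinearMap.trace F M (A * D * s * π) = LinearMap.trace F M (A * D * s) := by
    rw [LinearMap.trace_mul_comm, ← mul_assoc, ← mul_assoc, ← hAπ, mul_assoc A, hπD]
  have t3 : LinearMap.trace F M (A * D * s * π * s * D) = 0 := by
    have : D * (A * D * s * π * s) = 0 := by
      simp only [← mul_assoc]
      rw [hAD, neg_mul, mul_assoc A, hDD]
      simp
    rw [LinearMap.trace_mul_comm, this, map_zero]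
  rw [hdec, map_sub, map_add, t1, t2, t3]
  ring

/-- The Lefschetz fixed point theorem for automorphisms of acyclic posets, modulo two: the number
of chains of fixed points, the empty chain included, is even. -/
theorem ChainAcyclic.even_card_fixed {p : ℕ} (hp : p.Prime) {X : Set V}
    (h : ChainAcyclic (ZMod p) (orderComplex X)) (g : V ≃o V) (hgX : ∀ x, g x ∈ X ↔ x ∈ X) :
    Even (Finset.univ.filter fun t => t ∈ orderComplex {x | x ∈ X ∧ g x = x}).card := by
  set K := orderComplex X with hKdef
  have hKc : IsChainComplex K := isChainComplex_orderComplex X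
  have hQ := h.rat hp hKc
  have hgK : ∀ t : Finset V, t.map g.toEquiv.toEmbedding ∈ K ↔ t ∈ K := by
    intro t
    rw [hKdef, map_mem_orderComplex_iff]
    have : g ⁻¹' X = X := by ext x; exact hgX x
    rw [this]
  let π : Module.End ℚ (Finset V → ℚ) :=
    LinearMap.pi fun t => if t ∈ K then LinearMap.proj t else 0
  have hπ : ∀ f t, π f t = if t ∈ K then f t else 0 := by
    intro f t
    by_cases ht : t ∈ K <;> simp [π, ht]
  have hπmem : ∀ f, π f ∈ supportedOn ℚ K := fun f t ht => by rw [hπ, if_neg ht]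
  have hπid : ∀ f ∈ supportedOn ℚ K, π f = f := fun f hf => by
    ext t
    rw [hπ]
    by_cases ht : t ∈ K
    · rw [if_pos ht]
    · rw [if_neg ht, hf t ht]
  let A : Module.End ℚ (Finset V → ℚ) :=
    LinearMap.pi fun t => ((-1 : ℚ) ^ t.card) • LinearMap.proj (t.map g.toEquiv.toEmbedding)
  have hA : ∀ f t, A f t = (-1) ^ t.card * f (t.map g.toEquiv.toEmbedding) := fun f t => by
    simp [A]
  have hAd : ∀ f, chainBoundary ℚ V (A f) = -A (chainBoundary ℚ V f) := by
    intro f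
    ext t
    rw [Pi.neg_apply, hA, ← chainBoundary_comp_map, chainBoundary_apply, chainBoundary_apply,
      Finset.mul_sum, ← Finset.sum_neg_distrib]
    refine Finset.sum_congr rfl fun x hx => ?_
    rw [hA, Finset.card_insert_of_notMem (Finset.mem_compl.1 hx)]
    ring
  have hAπ : A * π = π * A := by
    refine LinearMap.ext fun f => funext fun t => ?_
    rw [Module.End.mul_apply, Module.End.mul_apply, hA, hπ, hπ, hA]
    simp only [hgK]
    split_ifs <;> simp
  have hππ : π * π = π := LinearMap.ext fun f => hπid _ (hπmem f)
  have htr := trace_mul_eq_zero_of_exact π (chainBoundary ℚ V * π) A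
    (LinearMap.ext fun f => hπid _ (chainBoundary_mem hKc (hπmem f)))
    (by rw [mul_assoc, hππ])
    (LinearMap.ext fun f => by
      change chainBoundary ℚ V (π (chainBoundary ℚ V (π f))) = 0
      rw [hπid _ (chainBoundary_mem hKc (hπmem f)), chainBoundary_chainBoundary hKc (hπmem f)])
    (by
      rw [mul_assoc, ← hAπ]
      exact LinearMap.ext fun f => hAd (π f))
    hAπ hππ
    (fun f hf => by
      obtain ⟨c, hc, hdc⟩ := hQ (π f) (hπmem f) hf
      exact ⟨c, by rw [Module.End.mul_apply, hπid c hc, hdc]⟩)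
  rw [LinearMap.trace_eq_matrix_trace ℚ (Pi.basisFun ℚ (Finset V)), Matrix.trace] at htr
  have hdiag : ∀ t : Finset V, (LinearMap.toMatrix (Pi.basisFun ℚ (Finset V))
      (Pi.basisFun ℚ (Finset V)) (A * π)).diag t =
      if t ∈ orderComplex {x | x ∈ X ∧ g x = x} then (-1) ^ t.card else 0 := by
    intro t
    rw [orderComplex_fixed, Matrix.diag_apply, LinearMap.toMatrix_apply]
    simp only [Pi.basisFun_apply, Pi.basisFun_repr, Module.End.mul_apply, hA, hπ, hgK,
      Pi.single_apply, Set.mem_ofPred_eq, ← hKdef]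
    split_ifs <;> simp_all
  rw [Finset.sum_congr rfl fun t _ => hdiag t, ← Finset.sum_filter] at htr
  have hsum : ∑ t ∈ Finset.univ.filter (fun t => t ∈ orderComplex {x | x ∈ X ∧ g x = x}),
      (-1 : ℤ) ^ t.card = 0 := by exact_mod_cast htr
  have h2 := congrArg (Int.cast : ℤ → ZMod 2) hsum
  have hneg : (-1 : ZMod 2) = 1 := by decide
  simp only [Int.cast_sum, Int.cast_pow, Int.cast_neg, Int.cast_one, hneg, one_pow,
    Finset.sum_const, nsmul_eq_mul, mul_one, Int.cast_zero] at h2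
  exact even_iff_two_dvd.2 ((ZMod.natCast_eq_zero_iff _ _).1 h2)

/-- Oliver's fixed point theorem for a group built from commuting automorphisms `t i` of prime
order `p`, an automorphism `g` preserving their fixed points, and an automorphism `u` of `2`-power
order preserving the common fixed points. -/
theorem exists_fixedPoint_of_chainAcyclic {ι : Type*} [Fintype ι] {p b : ℕ} (hp : p.Prime)
    {X : Set V} (h : ChainAcyclic (ZMod p) (orderComplex X)) (t : ι → V ≃o V) (g u : V ≃o V)
    (ht : ∀ i x, (t i)^[p] x = x) (htt : ∀ i j x, t i (t j x) = t j (t i x))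
    (htX : ∀ i x, t i x ∈ X ↔ x ∈ X) (hgX : ∀ x, g x ∈ X ↔ x ∈ X)
    (hgt : ∀ x, (∀ i, t i (g x) = g x) ↔ ∀ i, t i x = x)
    (hu : ∀ x, u^[2 ^ b] x = x) (huX : ∀ x, u x ∈ X ↔ x ∈ X)
    (hut : ∀ x, ((∀ i, t i x = x) ∧ g x = x) → ((∀ i, t i (u x) = u x) ∧ g (u x) = u x)) :
    ∃ x ∈ X, (∀ i, t i x = x) ∧ g x = x ∧ u x = x := by
  have h1 : ∀ s : Finset ι,
      ChainAcyclic (ZMod p) (orderComplex {x | x ∈ X ∧ ∀ i ∈ s, t i x = x}) := by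
    intro s
    induction s using Finset.induction_on with
    | empty => simpa using h
    | insert i s _ ih =>
      have h2 := ih.fixed hp (t i) (ht i) (fun x => by
        have : ∀ j, t j (t i x) = t i x ↔ t j x = x := fun j => by
          rw [htt, (t i).injective.eq_iff]
        simp [htX, this])
      convert h2 using 2
      ext x
      simp only [Set.mem_ofPred_eq, Finset.forall_mem_insert]
      tauto
  have h2 := (h1 Finset.univ).even_card_fixed hp g (fun x => by simp [hgX, hgt])
  by_contra hno
  push Not at hno
  set Y : Set V := {x | x ∈ {x | x ∈ X ∧ ∀ i ∈ Finset.univ, t i x = x} ∧ g x = x} with hY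
  have huY : ∀ x ∈ Y, u x ∈ Y := by
    rintro x ⟨⟨hx, hx'⟩, hxg⟩
    have h3 := hut x ⟨fun i => hx' i (Finset.mem_univ i), hxg⟩
    exact ⟨⟨(huX x).2 hx, fun i _ => h3.1 i⟩, h3.2⟩
  let f : Function.End {c // c ∈ orderComplex Y} := fun c =>
    ⟨c.1.map u.toEquiv.toEmbedding, (map_mem_orderComplex_iff u).2
      ⟨fun x hx => huY x (c.2.1 x hx), c.2.2⟩⟩
  have hfpow : ∀ (n : ℕ) (c : {c // c ∈ orderComplex Y}) (x : V), x ∈ c.1 →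
      u^[n] x ∈ ((f ^ n) c).1 := by
    intro n
    induction n with
    | zero => intro c x hx; exact hx
    | succ n ih =>
      intro c x hx
      rw [Function.iterate_succ_apply, pow_succ]
      exact ih (f c) (u x) (by simp [f, hx])
  have hfcard : ∀ (n : ℕ) (c : {c // c ∈ orderComplex Y}), ((f ^ n) c).1.card = c.1.card := by
    intro n
    induction n with
    | zero => intro c; rfl
    | succ n ih => intro c; rw [pow_succ]; exact (ih (f c)).trans (Finset.card_map _)
  have hf : f ^ 2 ^ b = 1 := by
    funext c
    refine Subtype.ext (Finset.eq_of_subset_of_card_le (fun x hx => ?_) (hfcard _ c).le).symm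
    have h4 := hfpow (2 ^ b) c x hx
    rwa [hu] at h4
  have h3 := Equiv.Perm.card_fixedPoints_modEq (p := 2) hf
  have h4 : Fintype.card f.fixedPoints = 1 := by
    rw [Fintype.card_eq_one_iff]
    have he : ∅ ∈ orderComplex Y := ⟨by simp, by simp⟩
    refine ⟨⟨⟨∅, he⟩, Subtype.ext (by simp [f])⟩, ?_⟩
    rintro ⟨⟨c, hc⟩, hfc⟩
    apply Subtype.ext
    apply Subtype.ext
    change c = ∅
    have h5 : c.map u.toEquiv.toEmbedding = c := congrArg Subtype.val hfc
    rw [map_eq_self_iff_of_chain u hc.2] at h5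
    refine Finset.eq_empty_of_forall_notMem fun x hx => ?_
    obtain ⟨⟨hx1, hx2⟩, hx3⟩ := hc.1 x hx
    exact hno x hx1 (fun i => hx2 i (Finset.mem_univ i)) hx3 (h5 x hx)
  have h5 : Fintype.card {c // c ∈ orderComplex Y} =
      (Finset.univ.filter fun c => c ∈ orderComplex Y).card := Fintype.card_subtype _
  rw [h4, h5] at h3
  rw [Nat.even_iff] at h2
  rw [Nat.ModEq, h2] at h3
  omega

end Lefschetz

section GraphProperties

/-- A Boolean function depending only on the variables in `S` has a decision tree of depth at most
`|S|`. -/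
lemma exists_decisionTree {E : Type} (S : Finset E) : ∀ f : (E → Bool) → Prop,
    (∀ x y, (∀ e ∈ S, x e = y e) → (f x ↔ f y)) →
    ∃ T : DecisionTree E, (∀ x, T.eval x = true ↔ f x) ∧ T.depth ≤ S.card := by
  induction S using Finset.induction_on with
  | empty =>
    intro f hf
    refine ⟨.leaf (decide (f fun _ => true)), fun x => ?_, le_rfl⟩
    simpa [DecisionTree.eval] using hf _ x (by simp)
  | insert e S he ih =>
    intro f hf
    have hup : ∀ b x y, (∀ e' ∈ S, x e' = y e') →
        (f (Function.update x e b) ↔ f (Function.update y e b)) := by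
      intro b x y hxy
      refine hf _ _ fun e' he' => ?_
      by_cases h : e' = e
      · simp [h]
      · simpa [h] using hxy e' ((Finset.mem_insert.1 he').resolve_left h)
    obtain ⟨T₁, hT₁, hd₁⟩ := ih (fun x => f (Function.update x e true)) (hup true)
    obtain ⟨T₂, hT₂, hd₂⟩ := ih (fun x => f (Function.update x e false)) (hup false)
    refine ⟨.node e T₁ T₂, fun x => ?_, ?_⟩
    · cases hx : x e
      · have : Function.update x e false = x := by rw [← hx, Function.update_eq_self]
        simp [DecisionTree.eval, hx, hT₂, this]
      · have : Function.update x e true = x := by rw [← hx, Function.update_eq_self]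
        simp [DecisionTree.eval, hx, hT₁, this]
    · rw [Finset.card_insert_of_notMem he]
      exact Nat.succ_le_succ (max_le hd₁ hd₂)

instance (n : ℕ) : Fintype (EdgeVar n) :=
  inferInstanceAs (Fintype {p : Fin n × Fin n // p.1 < p.2})

lemma card_edgeVar (n : ℕ) : Fintype.card (EdgeVar n) = n * (n - 1) / 2 := by
  have e : EdgeVar n ≃ Σ j : Fin n, {i : Fin n // i < j} :=
    { toFun := fun q => ⟨q.1.2, q.1.1, q.2⟩
      invFun := fun q => ⟨(q.2.1, q.1), q.2.2⟩
      left_inv := fun _ => rfl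
      right_inv := fun _ => rfl }
  rw [Fintype.card_congr e, Fintype.card_sigma, ← Finset.sum_range_id, Finset.sum_range]
  refine Finset.sum_congr rfl fun j _ => ?_
  rw [Fintype.card_subtype]
  have : (Finset.univ.filter fun i => i < j) = Finset.Iio j := by ext; simp
  rw [this, Fin.card_Iio]

lemma graphOfInput_adj {n : ℕ} (x : EdgeVar n → Bool) {i j : Fin n} (h : i < j) :
    (graphOfInput x).Adj i j ↔ x ⟨(i, j), h⟩ = true := by
  simp [graphOfInput, h.ne, h, h.not_gt]

lemma decide_eq_true_iff_of_inst {q : Prop} (inst : Decidable q) : @decide q inst = true ↔ q :=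
  decide_eq_true_iff

/-- The adjacency variables that are set in `G`. -/
def edgeVars {n : ℕ} (G : SimpleGraph (Fin n)) : Finset (EdgeVar n) :=
  Finset.univ.filter fun e => G.Adj e.1.1 e.1.2

lemma mem_edgeVars {n : ℕ} (G : SimpleGraph (Fin n)) (e : EdgeVar n) :
    e ∈ edgeVars G ↔ G.Adj e.1.1 e.1.2 := by
  simp [edgeVars]

/-- Graphs on `Fin n` are the same as sets of adjacency variables. -/
def graphOrderIso (n : ℕ) : SimpleGraph (Fin n) ≃o Finset (EdgeVar n) where
  toFun := edgeVars
  invFun A := graphOfInput fun e => decide (e ∈ A)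
  left_inv G := by
    have h : ∀ i j : Fin n, i < j →
        ((graphOfInput fun e => decide (e ∈ edgeVars G)).Adj i j ↔ G.Adj i j) := by
      intro i j hij
      exact (graphOfInput_adj _ hij).trans
        ((decide_eq_true_iff_of_inst _).trans (mem_edgeVars G ⟨(i, j), hij⟩))
    ext i j
    rcases lt_trichotomy i j with hij | rfl | hij
    · exact h i j hij
    · simp
    · rw [SimpleGraph.adj_comm, G.adj_comm]
      exact h j i hij
  right_inv A := by
    ext e
    exact (mem_edgeVars _ e).trans ((graphOfInput_adj _ e.2).trans (decide_eq_true_iff_of_inst _))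
  map_rel_iff' {G H} := by
    constructor
    · intro h
      have h' : ∀ i j : Fin n, i < j → G.Adj i j → H.Adj i j := fun i j hij hG =>
        (mem_edgeVars H ⟨(i, j), hij⟩).1 (h ((mem_edgeVars G _).2 hG))
      intro i j hG
      rcases lt_or_gt_of_ne hG.ne with hij | hij
      · exact h' i j hij hG
      · exact (h' j i hij hG.symm).symm
    · intro h e he
      exact (mem_edgeVars H e).2 (h ((mem_edgeVars G e).1 he))

/-- A monotone graph property that is not evasive has an acyclic order complex. -/
lemma chainAcyclic_of_not_evasive {R : Type*} [CommRing R] {n : ℕ} {P : Set (SimpleGraph (Fin n))}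
    (hmono : MonotoneDecreasing P) (hne : P.Nonempty) (h : ¬ Evasive P) :
    ChainAcyclic R (orderComplex {G | G ∈ P ∧ G ≠ ⊥}) := by
  obtain ⟨T, hT, hd⟩ : ∃ T : DecisionTree (EdgeVar n),
      (∀ x, T.eval x = true ↔ graphOfInput x ∈ P) ∧ T.depth < Fintype.card (EdgeVar n) := by
    obtain ⟨T₀, hT₀, hd₀⟩ := exists_decisionTree (Finset.univ : Finset (EdgeVar n))
      (fun x => graphOfInput x ∈ P)
      (fun x y hxy => by rw [funext fun e => hxy e (Finset.mem_univ e)])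
    obtain ⟨T, hT, hd⟩ := Nat.sInf_mem (s := {d | ∃ T : DecisionTree (EdgeVar n),
      (∀ x, T.eval x = true ↔ graphOfInput x ∈ P) ∧ T.depth ≤ d}) ⟨_, T₀, hT₀, hd₀⟩
    refine ⟨T, hT, lt_of_le_of_lt hd (lt_of_le_of_ne (Nat.sInf_le ⟨T₀, hT₀, hd₀⟩) ?_)⟩
    rw [card_edgeVar]
    exact h
  set e := graphOrderIso n
  have h1 := chainAcyclic_of_decisionTree (R := R) T Finset.univ ∅ {A | e.symm A ∈ P} (by simp)
    (fun A _ => by rw [hT, Finset.union_empty]; rfl)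
    (fun A A' hA hA' => hmono _ _ (e.symm.monotone hA) hA')
    (by
      obtain ⟨G, hG⟩ := hne
      exact hmono G _ (by
        rw [← Finset.bot_eq_empty, map_bot]
        exact bot_le) hG)
    (by simpa using hd)
  have h2 := h1.preimage e
  convert h2 using 2
  ext G
  have : G ≠ ⊥ ↔ (e G).Nonempty := by
    rw [Finset.nonempty_iff_ne_empty, ← Finset.bot_eq_empty, Ne, Ne, map_eq_bot_iff]
  simp [this]

/-- Pulling back graphs along a bijection, as an order isomorphism. -/
def comapOrderIso {V W : Type*} (σ : V ≃ W) : SimpleGraph W ≃o SimpleGraph V where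
  toFun G := G.comap σ
  invFun G := G.comap σ.symm
  left_inv G := by ext; simp
  right_inv G := by ext; simp
  map_rel_iff' {G H} := by
    refine ⟨fun h v w hG => ?_, fun h v w hG => h hG⟩
    simpa using h (v := σ.symm v) (w := σ.symm w) (by simpa using hG)

/-- The permutations of the vertices which are automorphisms of `G`. -/
def graphAut {W : Type*} (G : SimpleGraph W) : Subgroup (Equiv.Perm W) where
  carrier := {σ | ∀ v w, G.Adj (σ v) (σ w) ↔ G.Adj v w}
  mul_mem' {σ τ} hσ hτ v w := by simp [hσ _ _, hτ _ _]
  one_mem' := by simp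
  inv_mem' {σ} hσ v w := by
    rw [← hσ]
    simp

lemma comapOrderIso_eq_self_iff {W : Type*} {σ : Equiv.Perm W} {G : SimpleGraph W} :
    comapOrderIso σ G = G ↔ σ ∈ graphAut G := by
  constructor
  · intro h v w
    conv_rhs => rw [← h]
    rfl
  · intro h
    ext v w
    exact h v w

lemma mem_graphAut_comap {W : Type*} {σ τ : Equiv.Perm W} {G : SimpleGraph W} :
    σ ∈ graphAut (comapOrderIso τ G) ↔ τ * σ * τ⁻¹ ∈ graphAut G := by
  constructor
  · intro h v w
    have := h (τ⁻¹ v) (τ⁻¹ w)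
    simpa [comapOrderIso] using this
  · intro h v w
    have := h (τ v) (τ w)
    simpa [comapOrderIso] using this

/-- If `P` is not evasive, then a suitable group of permutations of the vertices fixes a nonempty
graph in `P`. -/
theorem exists_invariant_graph {n p b c M r : ℕ} (hp : p.Prime) {P : Set (SimpleGraph (Fin n))}
    (hP : IsGraphProperty P) (hmono : MonotoneDecreasing P) (hne : P.Nonempty) (hev : ¬ Evasive P)
    {W ι : Type*} [Fintype W] [Fintype ι] (ψ : Fin n ≃ W) (t : ι → Equiv.Perm W)
    (h s u : Equiv.Perm W) (ht : ∀ i, t i ^ p = 1) (htt : ∀ i j, t i * t j = t j * t i)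
    (hht : ∀ i, ∃ j, h * t i * h⁻¹ = t j) (hth : ∀ j, ∃ i, h * t i * h⁻¹ = t j)
    (hst : ∀ i, s * t i = t i * s) (hut : ∀ i, u * t i = t i * u) (hhs : h * s = s * h)
    (huh : u * h = h * u) (hus : u * s * u⁻¹ = s ^ c) (hM : h ^ M = 1) (hr : s ^ r = 1)
    (hMr : Nat.Coprime M r) (hu : u ^ 2 ^ b = 1) :
    ∃ G : SimpleGraph W, G ≠ ⊥ ∧ G.comap ψ ∈ P ∧ (∀ i, t i ∈ graphAut G) ∧ h ∈ graphAut G ∧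
      s ∈ graphAut G ∧ u ∈ graphAut G := by
  have hiter : ∀ (σ : Equiv.Perm W) (m : ℕ) (G : SimpleGraph W),
      (comapOrderIso σ)^[m] G = comapOrderIso (σ ^ m) G := by
    intro σ m
    induction m with
    | zero => intro G; ext; simp [comapOrderIso]
    | succ m ih =>
      intro G
      rw [Function.iterate_succ_apply, ih]
      ext
      simp [comapOrderIso, pow_succ']
  have hone : ∀ G : SimpleGraph W, comapOrderIso (1 : Equiv.Perm W) G = G := fun G => by
    ext; simp [comapOrderIso]
  have hinv : ∀ (τ : Equiv.Perm (Fin n)) (G : SimpleGraph (Fin n)), G ∈ P → G.comap τ ∈ P := by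
    intro τ G hG
    have := hP τ.symm G hG
    convert this using 1
    ext v w
    rw [SimpleGraph.map_adj]
    simp [Equiv.symm_apply_eq]
  have hsplit : ∀ G : SimpleGraph W, h * s ∈ graphAut G ↔ h ∈ graphAut G ∧ s ∈ graphAut G := by
    intro G
    refine ⟨fun hg => ?_, fun hg => mul_mem hg.1 hg.2⟩
    have h1 : s ^ M ∈ graphAut G := by
      have h2 := pow_mem hg M
      rwa [(show Commute h s from hhs).mul_pow, hM, one_mul] at h2
    have h2 : s ∈ graphAut G := by
      have h3 : s = (s ^ M) ^ (M.gcdA r) * (s ^ r) ^ (M.gcdB r) := by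
        rw [← zpow_natCast s M, ← zpow_natCast s r, ← zpow_mul, ← zpow_mul, ← zpow_add,
          ← Nat.gcd_eq_gcd_ab, hMr.gcd_eq_one]
        simp
      rw [h3, hr, one_zpow, mul_one]
      exact zpow_mem h1 _
    exact ⟨by simpa using mul_mem hg (inv_mem h2), h2⟩
  set e : SimpleGraph W ≃o SimpleGraph (Fin n) := comapOrderIso ψ
  set X : Set (SimpleGraph W) := e ⁻¹' {G | G ∈ P ∧ G ≠ ⊥} with hXdef
  have hmem : ∀ (σ : Equiv.Perm W) (G : SimpleGraph W), G ∈ X → comapOrderIso σ G ∈ X := by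
    rintro σ G ⟨hG, hG'⟩
    refine ⟨?_, ?_⟩
    · have := hinv ((ψ.trans σ).trans ψ.symm) _ hG
      convert this using 1
      ext v w
      simp [e, comapOrderIso]
    · rw [Ne, map_eq_bot_iff] at hG' ⊢
      rwa [map_eq_bot_iff]
  have hX : ∀ (σ : Equiv.Perm W) (G : SimpleGraph W), comapOrderIso σ G ∈ X ↔ G ∈ X := by
    refine fun σ G => ⟨fun hG => ?_, hmem σ G⟩
    have := hmem σ⁻¹ _ hG
    convert this using 1
    ext
    simp [comapOrderIso]
  have hst' : ∀ i, (h * s) * t i * (h * s)⁻¹ = h * t i * h⁻¹ := fun i => by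
    rw [mul_assoc h, hst, mul_inv_rev]
    group
  obtain ⟨G, ⟨hGP, hG0⟩, hGt, hGg, hGu⟩ := exists_fixedPoint_of_chainAcyclic (b := b) hp
    ((chainAcyclic_of_not_evasive (R := ZMod p) hmono hne hev).preimage e)
    (fun i => comapOrderIso (t i)) (comapOrderIso (h * s)) (comapOrderIso u)
    (fun i G => by rw [hiter, ht, hone])
    (fun i j G => by
      have := htt i j
      ext v w
      have h1 : ∀ v, t i (t j v) = t j (t i v) := fun v => Equiv.congr_fun this v
      simp [comapOrderIso, h1])
    (fun i => hX _) (hX _)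
    (fun G => by
      simp only [comapOrderIso_eq_self_iff, mem_graphAut_comap, hst']
      constructor
      · intro h1 j
        obtain ⟨i, hi⟩ := hth j
        exact hi ▸ h1 i
      · intro h1 i
        obtain ⟨j, hj⟩ := hht i
        exact hj ▸ h1 j)
    (fun G => by rw [hiter, hu, hone]) (hX _)
    (fun G => by
      simp only [comapOrderIso_eq_self_iff, mem_graphAut_comap, hsplit]
      have h1 : ∀ i, u * t i * u⁻¹ = t i := fun i => by rw [hut, mul_inv_cancel_right]
      have h2 : u * h * u⁻¹ = h := by rw [huh, mul_inv_cancel_right]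
      rw [h2, hus]
      rintro ⟨h3, h4, h5⟩
      exact ⟨fun i => (h1 i).symm ▸ h3 i, h4, pow_mem h5 c⟩)
  simp only [comapOrderIso_eq_self_iff, hsplit] at hGt hGg hGu
  refine ⟨G, fun h0 => hG0 (by rw [h0, map_bot]), hGP, hGt, hGg.1, hGg.2, hGu⟩

end GraphProperties

section VertexGroup

variable {p k r : ℕ}

/-- Translation by `b j` in the `j`-th block `ZMod p × {j}`. -/
def blockShift (b : ZMod k → ZMod p) : Equiv.Perm (ZMod p × ZMod k) where
  toFun z := (z.1 + b z.2, z.2)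
  invFun z := (z.1 - b z.2, z.2)
  left_inv z := by simp
  right_inv z := by simp

/-- The cyclic shift of the blocks, twisted by multiplication with `a` when returning to the
block `0`. -/
def blockCycle (a : (ZMod p)ˣ) : Equiv.Perm (ZMod p × ZMod k) where
  toFun z := ((if z.2 + 1 = 0 then a else 1 : (ZMod p)ˣ) * z.1, z.2 + 1)
  invFun z := (((if z.2 = 0 then a else 1 : (ZMod p)ˣ)⁻¹ : (ZMod p)ˣ) * z.1, z.2 - 1)
  left_inv z := by simp
  right_inv z := by simp

lemma blockShift_pow (b : ZMod k → ZMod p) (m : ℕ) (z : ZMod p × ZMod k) :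
    (blockShift b ^ m) z = (z.1 + m * b z.2, z.2) := by
  induction m with
  | zero => simp
  | succ m ih =>
    rw [pow_succ', Equiv.Perm.mul_apply, ih]
    simp [blockShift]
    ring

lemma blockCycle_pow_zero (a : (ZMod p)ˣ) (x : ZMod p) {m : ℕ} (hm : m < k) :
    (blockCycle (k := k) a ^ m) (x, 0) = (x, (m : ZMod k)) := by
  induction m with
  | zero => simp
  | succ m ih =>
    have h : ((m : ZMod k) + 1) ≠ 0 := by
      intro h
      have h' : ((m + 1 : ℕ) : ZMod k) = 0 := by exact_mod_cast h
      rw [ZMod.natCast_eq_zero_iff] at h'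
      exact absurd (Nat.le_of_dvd (by omega) h') (by omega)
    rw [pow_succ', Equiv.Perm.mul_apply, ih (by omega)]
    simp [blockCycle, h]

lemma blockCycle_pow_val [NeZero k] (a : (ZMod p)ˣ) (z : ZMod p × ZMod k) :
    (blockCycle (k := k) a ^ z.2.val) (z.1, 0) = z := by
  rw [blockCycle_pow_zero a z.1 (ZMod.val_lt z.2), ZMod.natCast_zmod_val]

lemma blockCycle_pow_card [NeZero k] (a : (ZMod p)ˣ) (z : ZMod p × ZMod k) :
    (blockCycle (k := k) a ^ k) z = (a * z.1, z.2) := by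
  have h0 : ∀ x : ZMod p, (blockCycle (k := k) a ^ k) (x, 0) = (a * x, 0) := by
    intro x
    obtain ⟨m, hm⟩ : ∃ m, k = m + 1 := ⟨k - 1, by have := NeZero.pos k; omega⟩
    have h : ((m : ZMod k) + 1) = 0 := by
      have : ((m + 1 : ℕ) : ZMod k) = 0 := by rw [← hm]; simp
      exact_mod_cast this
    have h1 : blockCycle (k := k) a ^ k = blockCycle a * blockCycle a ^ m := by
      rw [← pow_succ', ← hm]
    rw [h1, Equiv.Perm.mul_apply, blockCycle_pow_zero a x (by omega)]
    simp [blockCycle, h]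
  conv_lhs => rw [← blockCycle_pow_val a z]
  rw [← Equiv.Perm.mul_apply, ← pow_add, add_comm, pow_add, Equiv.Perm.mul_apply, h0]
  exact blockCycle_pow_val a (a * z.1, z.2)

lemma blockCycle_pow_mul [NeZero k] (a : (ZMod p)ˣ) (m : ℕ) (z : ZMod p × ZMod k) :
    (blockCycle (k := k) a ^ (k * m)) z = ((a ^ m : (ZMod p)ˣ) * z.1, z.2) := by
  induction m with
  | zero => simp
  | succ m ih =>
    rw [mul_add, mul_one, add_comm, pow_add, Equiv.Perm.mul_apply, ih, blockCycle_pow_card]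
    simp [pow_succ', mul_assoc]

lemma blockCycle_conj (a : (ZMod p)ˣ) (b : ZMod k → ZMod p) :
    blockCycle a * blockShift b * (blockCycle a)⁻¹ =
      blockShift fun j => ((if j = 0 then a else 1 : (ZMod p)ˣ) : ZMod p) * b (j - 1) := by
  rw [mul_inv_eq_iff_eq_mul]
  ext z <;> simp [blockCycle, blockShift, mul_add]

/-- The vertex set: `k` blocks of size `p` and one of size `r`. -/
abbrev BlockVertex (p k r : ℕ) := (ZMod p × ZMod k) ⊕ ZMod r

lemma sumCongr_one_pow (σ : Equiv.Perm (ZMod p × ZMod k)) (m : ℕ) :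
    (Equiv.Perm.sumCongr σ (1 : Equiv.Perm (ZMod r))) ^ m = Equiv.Perm.sumCongr (σ ^ m) 1 := by
  simpa using (map_pow (Equiv.Perm.sumCongrHom (ZMod p × ZMod k) (ZMod r)) (σ, 1) m).symm

lemma one_sumCongr_pow (σ : Equiv.Perm (ZMod r)) (m : ℕ) :
    (Equiv.Perm.sumCongr (1 : Equiv.Perm (ZMod p × ZMod k)) σ) ^ m =
      Equiv.Perm.sumCongr 1 (σ ^ m) := by
  simpa using (map_pow (Equiv.Perm.sumCongrHom (ZMod p × ZMod k) (ZMod r)) (1, σ) m).symm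

lemma addRight_pow_apply (m : ℕ) (y : ZMod r) : (Equiv.addRight (1 : ZMod r) ^ m) y = y + m := by
  induction m with
  | zero => simp
  | succ m ih =>
    rw [pow_succ', Equiv.Perm.mul_apply, ih]
    simp [add_assoc]

lemma mulLeft_pow_apply (ω : (ZMod r)ˣ) (m : ℕ) (y : ZMod r) :
    ((Units.mulLeft ω : Equiv.Perm (ZMod r)) ^ m) y = (ω ^ m : (ZMod r)ˣ) * y := by
  induction m with
  | zero => simp
  | succ m ih =>
    rw [pow_succ', Equiv.Perm.mul_apply, ih]
    simp [pow_succ', mul_assoc]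

lemma card_le_degree {W ι : Type*} [Fintype W] [Fintype ι] {G : SimpleGraph W} {v : W} (f : ι → W)
    (hf : Function.Injective f) (h : ∀ i, G.Adj v (f i)) : Fintype.card ι ≤ G.degree v := by
  rw [← SimpleGraph.card_neighborSet_eq_degree]
  exact Fintype.card_le_of_injective (fun i => ⟨f i, h i⟩)
    fun i j hij => hf (congrArg Subtype.val hij)

lemma sum_degree_eq_ncard {W : Type*} [Fintype W] (G : SimpleGraph W) :
    ∑ v, G.degree v = 2 * G.edgeSet.ncard := by
  rw [G.sum_degrees_eq_twice_card_edges, ← SimpleGraph.coe_edgeFinset, Set.ncard_coe_finset]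

/-- An edge meeting the blocks of size `p` has many translates. -/
lemma card_edges_of_adj_inl [NeZero k] [Fact p.Prime] [NeZero r] (hpr : p - 1 ≤ r)
    {G : SimpleGraph (BlockVertex p k r)} {a : (ZMod p)ˣ} (ha : ∀ x : (ZMod p)ˣ, ∃ m : ℕ, a ^ m = x)
    (ht : ∀ b : ZMod k → ZMod p, Equiv.Perm.sumCongr (blockShift b) 1 ∈ graphAut G)
    (hh : Equiv.Perm.sumCongr (blockCycle a) 1 ∈ graphAut G)
    (hs : Equiv.Perm.sumCongr 1 (Equiv.addRight 1) ∈ graphAut G)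
    {z : ZMod p × ZMod k} {w : BlockVertex p k r} (hzw : G.Adj (.inl z) w) :
    k * p * (p - 1) ≤ 2 * G.edgeSet.ncard := by
  have hpow : ∀ m, Equiv.Perm.sumCongr (blockCycle a ^ m) 1 ∈ graphAut G := fun m => by
    rw [← sumCongr_one_pow]
    exact pow_mem hh m
  have htrans : ∀ z : ZMod p × ZMod k, ∃ σ ∈ graphAut G, σ (.inl (0, 0)) = .inl z := fun z =>
    ⟨_, mul_mem (hpow z.2.val) (ht fun _ => z.1), by
      simp [blockShift, blockCycle_pow_val a z]⟩
  have hdeg : ∀ z : ZMod p × ZMod k, p - 1 ≤ G.degree (.inl z) := by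
    obtain ⟨w₀, hw₀⟩ : ∃ w₀, G.Adj (.inl (0, 0)) w₀ := by
      obtain ⟨σ, hσ, hσz⟩ := htrans z
      refine ⟨σ⁻¹ w, ?_⟩
      rw [← hσ, hσz]
      simpa using hzw
    have hnbr : ∃ f : (ZMod p)ˣ → BlockVertex p k r, Function.Injective f ∧
        ∀ x, G.Adj (.inl (0, 0)) (f x) := by
      rcases w₀ with ⟨x, j⟩ | y
      · by_cases hj : j = 0
        · subst hj
          have hx : x ≠ 0 := fun h => hw₀.ne (by rw [h])
          refine ⟨fun c => .inl (c * x, 0), fun c d hcd => ?_, fun c => ?_⟩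
          · simpa [hx, Units.ext_iff] using hcd
          · obtain ⟨m, rfl⟩ := ha c
            have := (hpow (k * m) _ _).2 hw₀
            simpa [blockCycle_pow_mul] using this
        · refine ⟨fun c => .inl (x + c, j), fun c d hcd => ?_, fun c => ?_⟩
          · simpa [Units.ext_iff] using hcd
          · have := (ht (Pi.single j c) _ _).2 hw₀
            simpa [blockShift, Ne.symm hj] using this
      · obtain ⟨f⟩ : Nonempty ((ZMod p)ˣ ↪ ZMod r) := by
          rw [Function.Embedding.nonempty_iff_card_le, ZMod.card_units_eq_totient,
            Nat.totient_prime Fact.out, ZMod.card]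
          exact hpr
        refine ⟨fun c => .inr (y + f c), fun c d hcd => ?_, fun c => ?_⟩
        · simpa using hcd
        · have := (pow_mem hs (f c).val _ _).2 hw₀
          rw [one_sumCongr_pow] at this
          simpa [addRight_pow_apply] using this
    intro z
    obtain ⟨f, hf, hadj⟩ := hnbr
    obtain ⟨σ, hσ, hσz⟩ := htrans z
    have := card_le_degree (G := G) (v := .inl z) (fun x => σ (f x)) (σ.injective.comp hf)
      fun x => by
        rw [← hσz]
        exact (hσ _ _).2 (hadj x)
    rwa [ZMod.card_units_eq_totient, Nat.totient_prime Fact.out] at this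
  rw [← sum_degree_eq_ncard, Fintype.sum_sum_type]
  calc k * p * (p - 1) = ∑ z : ZMod p × ZMod k, (p - 1) := by
        simp [ZMod.card, mul_comm k p]
    _ ≤ ∑ z : ZMod p × ZMod k, G.degree (.inl z) := Finset.sum_le_sum fun z _ => hdeg z
    _ ≤ _ := Nat.le_add_right _ _

/-- An edge inside the block of size `r` has many translates. -/
lemma card_edges_of_adj_inr [NeZero k] [NeZero p] [Fact r.Prime]
    {G : SimpleGraph (BlockVertex p k r)} {ω : (ZMod r)ˣ}
    (hs : Equiv.Perm.sumCongr 1 (Equiv.addRight 1) ∈ graphAut G)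
    (hu : Equiv.Perm.sumCongr 1 (Units.mulLeft ω) ∈ graphAut G)
    {y y' : ZMod r} (hy : G.Adj (.inr y) (.inr y')) :
    r * orderOf ω ≤ 2 * G.edgeSet.ncard := by
  have hshift : ∀ v w x : ZMod r, G.Adj (.inr v) (.inr w) → G.Adj (.inr (v + x)) (.inr (w + x)) := by
    intro v w x h
    have := (pow_mem hs x.val _ _).2 h
    rw [one_sumCongr_pow] at this
    simpa [addRight_pow_apply] using this
  have hd : y' - y ≠ 0 := fun h => hy.ne (by rw [sub_eq_zero.1 h])
  have h0 : G.Adj (.inr 0) (.inr (y' - y)) := by simpa [sub_eq_add_neg] using hshift _ _ (-y) hy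
  have hdeg : ∀ v : ZMod r, orderOf ω ≤ G.degree (.inr v) := by
    intro v
    have := card_le_degree (G := G) (v := .inr v)
      (fun x : Subgroup.zpowers ω => (.inr ((x : (ZMod r)ˣ) * (y' - y) + v) : BlockVertex p k r))
      (fun c d hcd => by
        have h1 := mul_right_cancel₀ hd (add_right_cancel (Sum.inr_injective hcd))
        exact Subtype.ext (Units.ext h1))
      (fun x => by
        obtain ⟨x, hx⟩ := x
        obtain ⟨m, rfl⟩ := mem_powers_iff_mem_zpowers.2 hx
        have h1 := (pow_mem hu m _ _).2 h0
        rw [one_sumCongr_pow] at h1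
        simp only [Equiv.Perm.sumCongr_apply, Sum.map_inr, mulLeft_pow_apply, mul_zero] at h1
        simpa using hshift _ _ v h1)
    rwa [Fintype.card_zpowers] at this
  rw [← sum_degree_eq_ncard, Fintype.sum_sum_type]
  calc r * orderOf ω = ∑ z : ZMod r, orderOf ω := by simp [ZMod.card]
    _ ≤ ∑ z : ZMod r, G.degree (.inr z) := Finset.sum_le_sum fun z _ => hdeg z
    _ ≤ _ := Nat.le_add_left _ _

/-- A monotone graph property that is not evasive contains a graph with many edges, for each
suitable decomposition `n = p k + r`. -/
theorem exists_many_edges_of_not_evasive {n p k r β : ℕ} (hp : p.Prime) (hr : r.Prime) (hk : 0 < k)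
    (hn : n = p * k + r) (hcop : Nat.Coprime (k * (p - 1)) r) (hβ : 2 ^ β ∣ r - 1)
    (hpr : p - 1 ≤ r) {P : Set (SimpleGraph (Fin n))} (hP : IsGraphProperty P)
    (hmono : MonotoneDecreasing P) (hne : P.Nonempty) (hev : ¬ Evasive P) :
    ∃ G ∈ P, k * p * (p - 1) ≤ 2 * G.edgeSet.ncard ∨ r * 2 ^ β ≤ 2 * G.edgeSet.ncard := by
  have : Fact p.Prime := ⟨hp⟩
  have : Fact r.Prime := ⟨hr⟩
  have : NeZero k := ⟨hk.ne'⟩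
  obtain ⟨a, ha⟩ := IsCyclic.exists_generator (α := (ZMod p)ˣ)
  obtain ⟨ω, hω⟩ : ∃ ω : (ZMod r)ˣ, orderOf ω = 2 ^ β := by
    obtain ⟨ω, hω⟩ := IsCyclic.exists_generator (α := (ZMod r)ˣ)
    have hc : orderOf ω = r - 1 := by
      rw [orderOf_eq_card_of_forall_mem_zpowers hω, Nat.card_eq_fintype_card,
        ZMod.card_units_eq_totient, Nat.totient_prime hr]
    obtain ⟨m, hm⟩ := hβ
    have hm0 : m ≠ 0 := by rintro rfl; have := hr.two_le; omega
    refine ⟨ω ^ m, ?_⟩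
    rw [orderOf_pow_of_dvd hm0 (by rw [hc, hm]; exact Dvd.intro_left _ rfl), hc, hm,
      Nat.mul_div_cancel _ (Nat.pos_of_ne_zero hm0)]
  have hcard : Fintype.card (BlockVertex p k r) = Fintype.card (Fin n) := by
    simp [ZMod.card, hn]
  set ψ : Fin n ≃ BlockVertex p k r := (Fintype.equivOfCardEq hcard).symm
  have hap : a ^ (p - 1) = 1 := ZMod.units_pow_card_sub_one_eq_one p a
  obtain ⟨G, hG0, hGP, hGt, hGh, hGs, hGu⟩ := exists_invariant_graph (b := β)
    (c := ((ω : (ZMod r)ˣ) : ZMod r).val) (M := k * (p - 1)) (r := r) hp hP hmono hne hev ψ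
    (fun b : ZMod k → ZMod p => Equiv.Perm.sumCongr (blockShift b) 1)
    (Equiv.Perm.sumCongr (blockCycle a) 1) (Equiv.Perm.sumCongr 1 (Equiv.addRight 1))
    (Equiv.Perm.sumCongr 1 (Units.mulLeft ω))
    (fun b => by
      rw [sumCongr_one_pow, ← Equiv.Perm.sumCongr_one]
      congr 1
      ext z <;> simp [blockShift_pow])
    (fun b c => by
      simp only [Equiv.Perm.sumCongr_mul, mul_one]
      congr 1
      ext z <;> simp [blockShift]
      ring)
    (fun b => ⟨_, by
      simp only [Equiv.Perm.sumCongr_mul, Equiv.Perm.sumCongr_inv, mul_one, inv_one]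
      rw [blockCycle_conj]⟩)
    (fun b => ⟨fun j => (((if j + 1 = 0 then a else 1)⁻¹ : (ZMod p)ˣ) : ZMod p) * b (j + 1), by
      simp only [Equiv.Perm.sumCongr_mul, Equiv.Perm.sumCongr_inv, mul_one, inv_one]
      rw [blockCycle_conj]
      congr 2
      funext j
      rw [sub_add_cancel]
      exact Units.mul_inv_cancel_left _ _⟩)
    (fun b => by simp [Equiv.Perm.sumCongr_mul])
    (fun b => by simp [Equiv.Perm.sumCongr_mul])
    (by simp [Equiv.Perm.sumCongr_mul])
    (by simp [Equiv.Perm.sumCongr_mul])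
    (by
      rw [one_sumCongr_pow, mul_inv_eq_iff_eq_mul]
      simp only [Equiv.Perm.sumCongr_mul, mul_one]
      congr 1
      ext y
      simp [mul_add])
    (by
      rw [sumCongr_one_pow, ← Equiv.Perm.sumCongr_one]
      congr 1
      ext z <;> simp [blockCycle_pow_mul, hap])
    (by
      rw [one_sumCongr_pow, ← Equiv.Perm.sumCongr_one]
      congr 1
      ext y
      simp)
    hcop
    (by
      rw [one_sumCongr_pow, ← Equiv.Perm.sumCongr_one]
      congr 1
      ext y
      rw [mulLeft_pow_apply, ← hω, pow_orderOf_eq_one]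
      simp)
  refine ⟨_, hGP, ?_⟩
  have hncard : (G.comap ψ).edgeSet.ncard = G.edgeSet.ncard := by
    have := SimpleGraph.Iso.card_edgeFinset_eq (SimpleGraph.Iso.comap ψ G)
    rw [← SimpleGraph.coe_edgeFinset, ← SimpleGraph.coe_edgeFinset, Set.ncard_coe_finset,
      Set.ncard_coe_finset, this]
  rw [hncard]
  obtain ⟨v, w, hvw⟩ := SimpleGraph.ne_bot_iff_exists_adj.1 hG0
  have ha' : ∀ x : (ZMod p)ˣ, ∃ m : ℕ, a ^ m = x := fun x => mem_powers_iff_mem_zpowers.2 (ha x)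
  rcases v with z | y
  · exact .inl (card_edges_of_adj_inl hpr ha' hGt hGh hGs hvw)
  · rcases w with z | y'
    · exact .inl (card_edges_of_adj_inl hpr ha' hGt hGh hGs hvw.symm)
    · exact .inr (hω ▸ card_edges_of_adj_inr hGs hGu hvw)

end VertexGroup

section Decomposition

/-- Among three primes of size comparable to `x`, one does not divide a given `n ≤ x ^ 3`. -/
lemma exists_prime_not_dvd {n : ℕ} {x : ℝ} (hn : 0 < n) (hx : 1 ≤ x) (hnx : (n : ℝ) ≤ x ^ 3) :
    ∃ p : ℕ, p.Prime ∧ ¬ p ∣ n ∧ x < p ∧ (p : ℝ) ≤ 8 * x := by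
  set y := ⌊x⌋₊
  have hy : (y : ℝ) ≤ x := Nat.floor_le (by linarith)
  have hy' : x < y + 1 := Nat.lt_floor_add_one x
  have hy1 : 1 ≤ y := Nat.le_floor (by exact_mod_cast hx)
  obtain ⟨p, hp, hyp, hpy⟩ := Nat.exists_prime_lt_and_le_two_mul y (by omega)
  obtain ⟨q, hq, hpq, hqp⟩ := Nat.exists_prime_lt_and_le_two_mul p hp.ne_zero
  obtain ⟨l, hl, hql, hlq⟩ := Nat.exists_prime_lt_and_le_two_mul q hq.ne_zero
  have hbound : ∀ z : ℕ, y < z → z ≤ 8 * y → x < z ∧ (z : ℝ) ≤ 8 * x := by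
    intro z h1 h2
    have h1' : (y : ℝ) + 1 ≤ z := by exact_mod_cast h1
    have h2' : (z : ℝ) ≤ 8 * y := by exact_mod_cast h2
    exact ⟨by linarith, by linarith⟩
  have hpb := hbound p hyp (by omega)
  have hqb := hbound q (by omega) (by omega)
  have hlb := hbound l (by omega) (by omega)
  by_cases hpn : p ∣ n
  · by_cases hqn : q ∣ n
    · by_cases hln : l ∣ n
      · have hpq' : Nat.Coprime p q := (Nat.coprime_primes hp hq).2 hpq.ne
        have hpl : Nat.Coprime p l := (Nat.coprime_primes hp hl).2 (by omega)
        have hql' : Nat.Coprime q l := (Nat.coprime_primes hq hl).2 hql.ne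
        have hdvd := (Nat.Coprime.mul_left hpl hql').mul_dvd_of_dvd_of_dvd
          (hpq'.mul_dvd_of_dvd_of_dvd hpn hqn) hln
        have h1 : ((p * q * l : ℕ) : ℝ) ≤ n := by exact_mod_cast Nat.le_of_dvd hn hdvd
        push_cast at h1
        have h2 : x * x * x < p * q * l := by
          have h3 : x * x < p * q := mul_lt_mul'' hpb.1 hqb.1 (by linarith) (by linarith)
          exact mul_lt_mul'' h3 hlb.1 (by positivity) (by linarith)
        linarith [(by ring : x ^ 3 = x * x * x)]
      · exact ⟨l, hl, hln, hlb⟩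
    · exact ⟨q, hq, hqn, hqb⟩
  · exact ⟨p, hp, hpn, hpb⟩

lemma exists_two_pow_near {x : ℝ} (hx : 2 ≤ x) :
    ∃ β : ℕ, 1 ≤ β ∧ x < 2 * 2 ^ β ∧ (2 : ℝ) ^ β ≤ x := by
  have hy : 2 ≤ ⌊x⌋₊ := Nat.le_floor (by exact_mod_cast hx)
  refine ⟨Nat.log 2 ⌊x⌋₊, Nat.le_log_of_pow_le (by norm_num) (by simpa using hy), ?_, ?_⟩
  · have h1 : ⌊x⌋₊ + 1 ≤ 2 ^ (Nat.log 2 ⌊x⌋₊ + 1) := Nat.lt_pow_succ_log_self (by norm_num) _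
    have h2 : (⌊x⌋₊ : ℝ) + 1 ≤ 2 ^ (Nat.log 2 ⌊x⌋₊ + 1) := by exact_mod_cast h1
    rw [pow_succ'] at h2
    exact (Nat.lt_floor_add_one x).trans_le h2
  · have h1 : 2 ^ Nat.log 2 ⌊x⌋₊ ≤ ⌊x⌋₊ := Nat.pow_log_le_self 2 (by omega)
    have h2 : (2 : ℝ) ^ Nat.log 2 ⌊x⌋₊ ≤ ⌊x⌋₊ := by exact_mod_cast h1
    exact h2.trans (Nat.floor_le (by linarith))

/-- A bound on primes in arithmetic progressions yields a decomposition `n = p k + r` with `r`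
prime and `r - 1` highly divisible by `2`. -/
lemma exists_decomposition {n : ℕ} {R D C δ : ℝ} (hδ : 0 < δ) (hδ' : δ ≤ 1) (hR : 0 < R)
    (hRn : R ^ 2 = n) (hD : D = (n : ℝ) ^ δ) (hDR : D ^ 4 ≤ R) (h8 : 8 ≤ D) (hC : 0 ≤ C)
    (hCD : 512 * C < D)
    (chowla : ∀ m : ℕ, 2 ≤ m → ∀ a : ℕ, Nat.Coprime a m →
      ∃ p : ℕ, p.Prime ∧ p % m = a % m ∧ (p : ℝ) ≤ C * (m : ℝ) ^ (1 + δ)) :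
    ∃ p k r β : ℕ, p.Prime ∧ r.Prime ∧ 0 < k ∧ n = p * k + r ∧ Nat.Coprime (k * (p - 1)) r ∧
      2 ^ β ∣ r - 1 ∧ p - 1 ≤ r ∧ 2 * R ^ 3 < D ^ 4 * (k * p * (p - 1) : ℕ) ∧
      2 * R ^ 3 < D ^ 4 * (r * 2 ^ β : ℕ) := by
  have hD0 : 0 < D := by linarith
  have hn0 : (0 : ℝ) < n := by rw [← hRn]; positivity
  obtain ⟨x, hx⟩ : ∃ x, x = R / D := ⟨_, rfl⟩
  have hD23 : D ^ 2 * 8 ≤ D ^ 3 := by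
    rw [pow_succ D 2]
    gcongr
  have hxD : x * D = R := by rw [hx]; field_simp
  have hx0 : 0 < x := by rw [hx]; positivity
  have hDx : D ^ 3 ≤ x := by
    have : D ^ 3 * D ≤ x * D := by rw [hxD]; linarith [pow_succ D 3]
    exact le_of_mul_le_mul_right this hD0
  have hx8 : 512 ≤ x := by
    have : (8 : ℝ) ^ 3 ≤ D ^ 3 := by gcongr
    linarith
  have hnx : (n : ℝ) ≤ x ^ 3 := by
    rw [← hRn, ← hxD, mul_pow]
    have h1 : D ^ 2 ≤ x := by linarith [sq_nonneg D]
    calc x ^ 2 * D ^ 2 ≤ x ^ 2 * x := by gcongr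
      _ = x ^ 3 := by ring
  obtain ⟨p, hp, hpn, hxp, hpx⟩ := exists_prime_not_dvd (by exact_mod_cast hn0) (by linarith) hnx
  obtain ⟨β, hβ1, hβx, hxβ⟩ := exists_two_pow_near (x := x) (by linarith)
  have hp3 : 512 < p := by exact_mod_cast (lt_of_le_of_lt hx8 hxp)
  have hp2 : Nat.Coprime p 2 := (Nat.coprime_primes hp Nat.prime_two).2 (by omega)
  have hco : Nat.Coprime p (2 ^ β) := hp2.pow_right β
  set m := p * 2 ^ β with hm
  have hm0 : 0 < m := by have := hp.pos; positivity
  obtain ⟨a, ha⟩ : ∃ a, a = (Nat.chineseRemainder hco n 1 : ℕ) := ⟨_, rfl⟩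
  have hap : a ≡ n [MOD p] := ha ▸ (Nat.chineseRemainder hco n 1).2.1
  have haβ : a ≡ 1 [MOD 2 ^ β] := ha ▸ (Nat.chineseRemainder hco n 1).2.2
  have ham : a < m := ha ▸ Nat.chineseRemainder_lt_mul hco n 1 hp.ne_zero (by positivity)
  have hapm : a + m ≡ n [MOD p] := by
    simpa using hap.add ((Nat.modEq_zero_iff_dvd).2 (Dvd.intro _ rfl : p ∣ m))
  have haβm : a + m ≡ 1 [MOD 2 ^ β] := by
    simpa using haβ.add ((Nat.modEq_zero_iff_dvd).2 (Dvd.intro_left _ rfl : 2 ^ β ∣ m))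
  have hcopm : Nat.Coprime (a + m) (2 * m) := by
    have h1 : Nat.Coprime (a + m) p := by
      rw [Nat.Coprime, hapm.gcd_eq]
      exact ((Nat.Prime.coprime_iff_not_dvd hp).2 hpn).symm
    have h2 : Nat.Coprime (a + m) 2 := by
      have h3 : a + m ≡ 1 [MOD 2] := haβm.of_dvd (dvd_pow_self 2 (by omega))
      rw [Nat.Coprime, h3.gcd_eq, Nat.gcd_one_left]
    exact h2.mul_right (h1.mul_right (h2.pow_right β))
  obtain ⟨r, hr, hrm, hrC⟩ := chowla (2 * m) (by omega) (a + m) hcopm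
  have hmr : m ≤ r := by
    have h1 := Nat.mod_le r (2 * m)
    rw [hrm, Nat.mod_eq_of_lt (by omega)] at h1
    omega
  have hrmod : r ≡ a + m [MOD 2 * m] := hrm
  have hrp : r ≡ n [MOD p] :=
    (hrmod.of_dvd ((Dvd.intro _ rfl : p ∣ m).mul_left 2)).trans hapm
  have hrβ : r ≡ 1 [MOD 2 ^ β] :=
    (hrmod.of_dvd ((Dvd.intro_left _ rfl : 2 ^ β ∣ m).mul_left 2)).trans haβm
  have hmx : (m : ℝ) ≤ 8 * x ^ 2 := by
    rw [hm]
    push_cast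
    calc (p : ℝ) * 2 ^ β ≤ (8 * x) * x := by gcongr
      _ = 8 * x ^ 2 := by ring
  have hxm : x ^ 2 / 2 < m := by
    rw [hm]
    push_cast
    have h1 : x * (x / 2) < p * 2 ^ β := mul_lt_mul'' hxp (by linarith) hx0.le (by positivity)
    linarith [sq x]
  have hxR : x ^ 2 * D ^ 2 = n := by rw [← mul_pow, hxD, hRn]
  have hrn : (r : ℝ) ≤ n / 2 := by
    have hMn : ((2 * m : ℕ) : ℝ) ≤ 16 * n := by
      push_cast
      have h1 : x ^ 2 * 1 ≤ x ^ 2 * D ^ 2 := by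
        gcongr
        exact one_le_pow₀ (by linarith)
      linarith
    have h1 : ((2 * m : ℕ) : ℝ) ^ δ ≤ 16 * D := by
      calc ((2 * m : ℕ) : ℝ) ^ δ ≤ (16 * n : ℝ) ^ δ := by gcongr
        _ = (16 : ℝ) ^ δ * D := by rw [Real.mul_rpow (by norm_num) hn0.le, hD]
        _ ≤ (16 : ℝ) ^ (1 : ℝ) * D := by gcongr; norm_num
        _ = 16 * D := by rw [Real.rpow_one]
    have hm0' : (0 : ℝ) < (2 * m : ℕ) := by exact_mod_cast (by omega : 0 < 2 * m)
    rw [Real.rpow_add hm0', Real.rpow_one] at hrC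
    have h2 : (r : ℝ) ≤ C * ((16 * x ^ 2) * (16 * D)) := by
      refine hrC.trans ?_
      gcongr
      push_cast
      linarith
    have h3 : C * ((16 * x ^ 2) * (16 * D)) = 512 * C * (x ^ 2 * D) / 2 := by ring
    have h4 : 512 * C * (x ^ 2 * D) ≤ D * (x ^ 2 * D) := by gcongr
    linarith [(by ring : D * (x ^ 2 * D) = x ^ 2 * D ^ 2)]
  have hrn' : r < n := by
    have : (r : ℝ) < n := by linarith
    exact_mod_cast this
  obtain ⟨k, hk⟩ := (Nat.modEq_iff_dvd' hrn'.le).1 hrp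
  have hnk : n = p * k + r := by omega
  have hk0 : 0 < k := by
    rcases Nat.eq_zero_or_pos k with rfl | h
    · omega
    · exact h
  have hnkR : (n : ℝ) = p * k + r := by exact_mod_cast hnk
  have hpk : (n : ℝ) / 2 ≤ k * p := by linarith [mul_comm (p : ℝ) k]
  have hmr' : (m : ℝ) ≤ r := by exact_mod_cast hmr
  have hkr : k < r := by
    have h1 : (k : ℝ) * x ≤ n := by
      have : (k : ℝ) * x ≤ k * p := by gcongr
      linarith [mul_comm (p : ℝ) k, (Nat.cast_nonneg r : (0 : ℝ) ≤ r)]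
    have h2 : (k : ℝ) ≤ x * D ^ 2 := by
      have : (k : ℝ) * x ≤ (x * D ^ 2) * x := by rw [← hxR] at h1; linarith
      exact le_of_mul_le_mul_right this hx0
    have h3 : x * D ^ 2 ≤ x ^ 2 / 2 := by
      have : x * (D ^ 2 * 2) ≤ x * x := by
        gcongr
        linarith [sq_nonneg D]
      linarith [sq x]
    have : (k : ℝ) < r := by linarith
    exact_mod_cast this
  have hpr : p < r := by
    have h1 : p * 2 ≤ m := by
      rw [hm]
      gcongr
      exact Nat.le_self_pow (by omega) 2
    have := hp.pos
    omega
  have hp1 : x / 2 < ((p - 1 : ℕ) : ℝ) := by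
    rw [Nat.cast_sub hp.one_le]
    push_cast
    linarith
  have hxD3 : R ^ 3 = x ^ 3 * D ^ 3 := by rw [← hxD]; ring
  refine ⟨p, k, r, β, hp, hr, hk0, hnk, ?_, ?_, by omega, ?_, ?_⟩
  · refine Nat.Coprime.mul_left ?_ ?_
    · exact (Nat.coprime_of_lt_prime hk0.ne' hkr hr).symm
    · exact (Nat.coprime_of_lt_prime (by omega) (by omega) hr).symm
  · exact (Nat.modEq_iff_dvd' hr.one_le).1 hrβ.symm
  · push_cast
    have h1 : x ^ 2 * D ^ 2 / 2 * (x / 2) ≤ (k * p : ℝ) * ((p - 1 : ℕ) : ℝ) := by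
      rw [hxR]
      gcongr
    have h2 : D ^ 4 * (x ^ 2 * D ^ 2 / 2 * (x / 2)) ≤ D ^ 4 * ((k * p : ℝ) * ((p - 1 : ℕ) : ℝ)) := by
      gcongr
    refine lt_of_lt_of_le ?_ h2
    rw [hxD3]
    have h3 : (8 : ℝ) ^ 3 ≤ D ^ 3 := by gcongr
    have h4 : 8 * (x ^ 3 * D ^ 3) < D ^ 3 * (x ^ 3 * D ^ 3) := by
      gcongr
      linarith
    linarith [(by ring : D ^ 4 * (x ^ 2 * D ^ 2 / 2 * (x / 2)) = D ^ 3 * (x ^ 3 * D ^ 3) / 4)]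
  · push_cast
    have h1 : x ^ 2 / 2 * (x / 2) < (r : ℝ) * 2 ^ β :=
      mul_lt_mul'' (by linarith) (by linarith) (by positivity) (by positivity)
    have h2 : D ^ 4 * (x ^ 2 / 2 * (x / 2)) < D ^ 4 * ((r : ℝ) * 2 ^ β) := by gcongr
    refine lt_of_le_of_lt ?_ h2
    rw [hxD3]
    have h4 : 8 * (x ^ 3 * D ^ 3) ≤ D * (x ^ 3 * D ^ 3) := by gcongr
    linarith [(by ring : D ^ 4 * (x ^ 2 / 2 * (x / 2)) = D * (x ^ 3 * D ^ 3) / 4)]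

end Decomposition

end OrderComplex

/-- Assuming Chowla's conjecture on the least Dirichlet prime, for every `ε > 0`,
every nontrivial monotone decreasing graph property of `n`-vertex graphs with at most
`n^{3/2-ε}` edges is evasive for all sufficiently large `n`. -/
theorem sparse_evasive_of_chowla
    (chowla : ∀ ε : ℝ, 0 < ε → ∃ C : ℝ, ∀ m : ℕ, 2 ≤ m → ∀ a : ℕ, Nat.Coprime a m →
      ∃ p : ℕ, p.Prime ∧ p % m = a % m ∧ (p : ℝ) ≤ C * (m : ℝ) ^ (1 + ε))
    (ε : ℝ) (hε : 0 < ε) :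
    ∃ N : ℕ, ∀ n : ℕ, N ≤ n → ∀ P : Set (SimpleGraph (Fin n)),
      IsGraphProperty P → MonotoneDecreasing P → P ≠ ∅ → P ≠ Set.univ →
      (∀ G ∈ P, (G.edgeSet.ncard : ℝ) ≤ (n : ℝ) ^ ((3 : ℝ) / 2 - ε)) →
      Evasive P := by
  obtain ⟨δ, hδ, hδε, hδ8⟩ : ∃ δ : ℝ, 0 < δ ∧ 4 * δ ≤ ε ∧ δ ≤ 1 / 8 :=
    ⟨min (ε / 4) (1 / 8), by positivity, by linarith [min_le_left (ε / 4) (1 / 8)],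
      min_le_right _ _⟩
  obtain ⟨C, hC⟩ := chowla δ hδ
  obtain ⟨N, hN⟩ := Filter.eventually_atTop.1
    (((tendsto_rpow_atTop hδ).comp tendsto_natCast_atTop_atTop).eventually_gt_atTop
      (max 8 (512 * |C|)))
  refine ⟨max N 1, fun n hn P hP hmono hne _ hedge => ?_⟩
  by_contra hev
  have hn1 : (1 : ℝ) ≤ n := by exact_mod_cast (le_max_right _ _).trans hn
  have hn0 : (0 : ℝ) < n := by linarith
  have hDn : max 8 (512 * |C|) < (n : ℝ) ^ δ := hN n ((le_max_left _ _).trans hn)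
  set D : ℝ := (n : ℝ) ^ δ with hD
  set R : ℝ := (n : ℝ) ^ (1 / 2 : ℝ) with hR
  have hR0 : 0 < R := Real.rpow_pos_of_pos hn0 _
  have hD4 : D ^ 4 = (n : ℝ) ^ (4 * δ) := by
    rw [hD, ← Real.rpow_mul_natCast hn0.le, mul_comm]
    norm_num
  have hR3 : R ^ 3 = (n : ℝ) ^ (3 / 2 : ℝ) := by
    rw [hR, ← Real.rpow_mul_natCast hn0.le]
    norm_num
  obtain ⟨p, k, r, β, hp, hr, hk, hnk, hcop, hβ, hpr, hkp, hrβ⟩ := exists_decomposition (n := n)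
    (R := R) (D := D) (C := |C|) hδ (by linarith) hR0
    (by rw [hR, ← Real.rpow_mul_natCast hn0.le]; norm_num) hD
    (by rw [hD4]; exact Real.rpow_le_rpow_of_exponent_le hn1 (by linarith))
    ((le_max_left _ _).trans hDn.le) (abs_nonneg C) (lt_of_le_of_lt (le_max_right _ _) hDn)
    (fun m hm a ha => by
      obtain ⟨p, hp, hpa, hpC⟩ := hC m hm a ha
      exact ⟨p, hp, hpa, hpC.trans (by gcongr; exact le_abs_self C)⟩)
  obtain ⟨G, hG, hGe⟩ := exists_many_edges_of_not_evasive hp hr hk hnk hcop hβ hpr hP hmono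
    (Set.nonempty_iff_ne_empty.2 hne) hev
  have hup : D ^ 4 * (G.edgeSet.ncard : ℝ) ≤ R ^ 3 := by
    calc D ^ 4 * (G.edgeSet.ncard : ℝ) ≤ (n : ℝ) ^ (4 * δ) * (n : ℝ) ^ ((3 : ℝ) / 2 - ε) := by
          rw [hD4]
          gcongr
          exact hedge G hG
      _ = (n : ℝ) ^ (4 * δ + (3 / 2 - ε)) := (Real.rpow_add hn0 _ _).symm
      _ ≤ R ^ 3 := by
          rw [hR3]
          exact Real.rpow_le_rpow_of_exponent_le hn1 (by linarith)
  have hlow : ∀ l : ℕ, l ≤ 2 * G.edgeSet.ncard → ¬ 2 * R ^ 3 < D ^ 4 * (l : ℝ) := by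
    intro l hl hlt
    have h1 : (l : ℝ) ≤ 2 * G.edgeSet.ncard := by exact_mod_cast hl
    have h2 : D ^ 4 * (l : ℝ) ≤ D ^ 4 * (2 * G.edgeSet.ncard) := by gcongr
    linarith
  exact hGe.elim (fun h => hlow _ h hkp) (fun h => hlow _ h hrβ)
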